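/- arXiv:2505.10391 — 2 statements merged into one kernel-verified Lean document; each statement's English description precedes it below -/
import Mathlib

section
/- Let α, β, γ be real numbers with αβγ(1−α) ≠ 0. There is a constant C (depending only on α, β, γ) such that for all X > 0, H, M, N ≥ 1 with X ≤ MN, and all complex coefficients a_h, b_m with |a_h| ≤ 1, |b_m| ≤ 1, the sum 𝔗 := Σ_{h∼H} Σ_{m∼M} Σ_{n∼N} a_h b_m e(X h^α m^β n^γ / (H^α M^β N^γ)) satisfies |𝔗| ≤ C · log(2 + XHMN) · ( H M^{1/2} N^{1/2} + X^{−1/2} H M N + H^{1/2} M N ). -/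
open Finset

/-- `e(t) = exp(2πit)`. -/
noncomputable def eR (t : ℝ) : ℂ := Complex.exp (2 * Real.pi * Complex.I * t)

lemma norm_eR (t : ℝ) : ‖eR t‖ = 1 := by
  have h : 2 * Real.pi * Complex.I * t = ((2 * Real.pi * t : ℝ) : ℂ) * Complex.I := by
    push_cast; ring
  rw [eR, h, Complex.norm_exp_ofReal_mul_I]

lemma eR_add (s t : ℝ) : eR (s + t) = eR s * eR t := by
  simp only [eR, ← Complex.exp_add]
  push_cast
  ring_nf

lemma conj_eR (t : ℝ) : (starRingEnd ℂ) (eR t) = eR (-t) := by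
  simp only [eR, ← Complex.exp_conj]
  simp [Complex.conj_ofReal, Complex.conj_ofNat]

lemma eR_nat_mul (k : ℕ) (t : ℝ) : eR (k * t) = eR t ^ k := by
  rw [eR, eR, ← Complex.exp_nat_mul]
  push_cast
  ring_nf

/-- Multiplying the kernel of a bounded bilinear form by `exp (i A u v)`, with `|u|, |v| ≤ 1`,
costs at most a factor `exp A`. -/
lemma norm_bilinear_twist_le {ι κ : Type*} (s : Finset ι) (t : Finset κ) (K : ι → κ → ℂ) (R : ℝ)
    (hR : ∀ (a : ι → ℂ) (c : κ → ℂ), (∀ i ∈ s, ‖a i‖ ≤ 1) → (∀ j ∈ t, ‖c j‖ ≤ 1) →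
      ‖∑ i ∈ s, ∑ j ∈ t, a i * c j * K i j‖ ≤ R)
    (a : ι → ℂ) (c : κ → ℂ) (ha : ∀ i ∈ s, ‖a i‖ ≤ 1) (hc : ∀ j ∈ t, ‖c j‖ ≤ 1)
    (u : ι → ℝ) (v : κ → ℝ) (hu : ∀ i ∈ s, |u i| ≤ 1) (hv : ∀ j ∈ t, |v j| ≤ 1)
    {A : ℝ} (hA : 0 ≤ A) :
    ‖∑ i ∈ s, ∑ j ∈ t, a i * c j * (K i j * Complex.exp (A * Complex.I * (u i * v j)))‖
      ≤ R * Real.exp A := by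
  have hexp : ∀ z : ℂ, HasSum (fun l : ℕ => ((l.factorial : ℂ))⁻¹ * z ^ l) (Complex.exp z) := by
    intro z
    have := NormedSpace.exp_series_hasSum_exp' (𝕂 := ℂ) z
    rw [← Complex.exp_eq_exp_ℂ] at this
    simpa [smul_eq_mul] using this
  have hsum : HasSum (fun l : ℕ => ∑ i ∈ s, ∑ j ∈ t, a i * c j * (K i j *
      ((l.factorial : ℂ)⁻¹ * (A * Complex.I * (u i * v j)) ^ l)))
      (∑ i ∈ s, ∑ j ∈ t, a i * c j * (K i j * Complex.exp (A * Complex.I * (u i * v j)))) :=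
    hasSum_sum fun i _ => hasSum_sum fun j _ => ((hexp _).mul_left _).mul_left _
  have hreal : HasSum (fun l : ℕ => R * ((l.factorial : ℝ)⁻¹ * A ^ l)) (R * Real.exp A) := by
    have := NormedSpace.exp_series_hasSum_exp' (𝕂 := ℝ) A
    rw [← Real.exp_eq_exp_ℝ] at this
    simpa [smul_eq_mul] using this.mul_left R
  rw [← hsum.tsum_eq]
  refine tsum_of_norm_bounded hreal fun l => ?_
  have hfac : ∑ i ∈ s, ∑ j ∈ t, a i * c j * (K i j *
      ((l.factorial : ℂ)⁻¹ * (A * Complex.I * (u i * v j)) ^ l)) =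
      ((l.factorial : ℂ)⁻¹ * (A * Complex.I) ^ l) *
        ∑ i ∈ s, ∑ j ∈ t, (a i * (u i : ℂ) ^ l) * (c j * (v j : ℂ) ^ l) * K i j := by
    simp only [mul_sum]
    refine sum_congr rfl fun i _ => sum_congr rfl fun j _ => ?_
    ring
  have hn : ‖((l.factorial : ℂ)⁻¹ * (A * Complex.I) ^ l)‖ = (l.factorial : ℝ)⁻¹ * A ^ l := by
    simp [abs_of_nonneg hA]
  rw [hfac, norm_mul, hn, mul_comm R]
  refine mul_le_mul_of_nonneg_left (hR _ _ (fun i hi => ?_) fun j hj => ?_) (by positivity)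
  · rw [norm_mul, norm_pow, Complex.norm_real]
    exact mul_le_one₀ (ha i hi) (by positivity) (pow_le_one₀ (norm_nonneg _) (hu i hi))
  · rw [norm_mul, norm_pow, Complex.norm_real]
    exact mul_le_one₀ (hc j hj) (by positivity) (pow_le_one₀ (norm_nonneg _) (hv j hj))

/-- Cauchy–Schwarz after sorting the second variable according to an integer frequency. -/
lemma sq_norm_bilinear_le {ι κ : Type*} (s : Finset ι) (t : Finset κ)
    (θ : ι → ℝ) (k : κ → ℕ) (K : ℕ) (hk : ∀ j ∈ t, k j < K)
    (a : ι → ℂ) (c : κ → ℂ) (hc : ∀ j ∈ t, ‖c j‖ ≤ 1) :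
    ‖∑ i ∈ s, ∑ j ∈ t, a i * c j * eR (k j * θ i)‖ ^ 2 ≤
      #{p ∈ t ×ˢ t | k p.1 = k p.2} * ∑ l ∈ range K, ‖∑ i ∈ s, a i * eR (l * θ i)‖ ^ 2 := by
  have h1 : ∑ i ∈ s, ∑ j ∈ t, a i * c j * eR (k j * θ i) =
      ∑ l ∈ range K, (∑ j ∈ t with k j = l, c j) * ∑ i ∈ s, a i * eR (l * θ i) := by
    rw [sum_comm, ← sum_fiberwise_of_maps_to (s := t) (t := range K) (g := k)
      (fun j hj => mem_range.2 (hk j hj))]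
    refine sum_congr rfl fun l _ => ?_
    rw [sum_mul]
    refine sum_congr rfl fun j hj => ?_
    rw [mul_sum]
    refine sum_congr rfl fun i _ => ?_
    rw [(mem_filter.1 hj).2]
    ring
  have h2 : ∀ l, ‖∑ j ∈ t with k j = l, c j‖ ≤ (#{j ∈ t | k j = l} : ℝ) := by
    intro l
    refine (norm_sum_le _ _).trans ?_
    refine (sum_le_sum fun j hj => hc j (mem_filter.1 hj).1).trans ?_
    simp
  have h3 : (#{p ∈ t ×ˢ t | k p.1 = k p.2} : ℝ) = ∑ l ∈ range K, (#{j ∈ t | k j = l} : ℝ) ^ 2 := by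
    have : #{p ∈ t ×ˢ t | k p.1 = k p.2} = ∑ l ∈ range K, #{j ∈ t | k j = l} ^ 2 := by
      rw [card_eq_sum_card_fiberwise (f := fun p : κ × κ => k p.1) (t := range K)]
      · refine sum_congr rfl fun l _ => ?_
        rw [sq, ← card_product]
        congr 1
        ext p
        simp only [mem_filter, mem_product]
        constructor
        · rintro ⟨⟨⟨h1, h2⟩, h3⟩, h4⟩
          exact ⟨⟨h1, h4⟩, h2, h3 ▸ h4⟩
        · rintro ⟨⟨h1, h4⟩, h2, h3⟩
          exact ⟨⟨⟨h1, h2⟩, h4.trans h3.symm⟩, h4⟩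
      · intro p hp
        have := (mem_product.1 (mem_filter.1 hp).1).1
        simpa using hk _ this
    rw [this]
    push_cast
    rfl
  rw [h1, h3]
  refine le_trans (pow_le_pow_left₀ (norm_nonneg _) ?_ 2) (sum_mul_sq_le_sq_mul_sq _ _ _)
  refine (norm_sum_le _ _).trans (sum_le_sum fun l _ => ?_)
  rw [norm_mul]
  exact mul_le_mul_of_nonneg_right (h2 l) (norm_nonneg _)

lemma norm_sum_eR_le_card (L : ℕ) (θ : ℝ) : ‖∑ k ∈ range L, eR (k * θ)‖ ≤ L := by
  refine (norm_sum_le _ _).trans ?_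
  simp [norm_eR]

lemma norm_sum_eR_mul_le (L : ℕ) {θ : ℝ} (hθ : |θ| ≤ 1 / 2) :
    ‖∑ k ∈ range L, eR (k * θ)‖ * (2 * |θ|) ≤ 1 := by
  have h1 : (∑ k ∈ range L, eR (k * θ)) * (eR θ - 1) = eR θ ^ L - 1 := by
    simp only [eR_nat_mul]
    exact geom_sum_mul _ _
  have h2 : ‖eR θ ^ L - 1‖ ≤ 2 := by
    refine (norm_sub_le _ _).trans ?_
    rw [norm_pow, norm_eR]
    norm_num
  have h3 : 4 * |θ| ≤ ‖eR θ - 1‖ := by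
    have e : eR θ = Complex.exp (Complex.I * ((2 * Real.pi * θ : ℝ) : ℂ)) := by
      rw [eR]; push_cast; ring_nf
    have hpi := Real.pi_pos
    rw [e, Complex.norm_exp_I_mul_ofReal_sub_one, norm_mul, Real.norm_eq_abs, Real.norm_eq_abs]
    have e2 : 2 * Real.pi * θ / 2 = Real.pi * θ := by ring
    have := Real.mul_abs_le_abs_sin (x := Real.pi * θ) (by
      rw [abs_mul, abs_of_pos hpi]; nlinarith)
    rw [abs_mul, abs_of_pos hpi] at this
    have e3 : 2 / Real.pi * (Real.pi * |θ|) = 2 * |θ| := by field_simp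
    rw [e3] at this
    rw [e2, abs_of_pos (by norm_num : (0:ℝ) < 2)]
    linarith
  rw [← h1, norm_mul] at h2
  nlinarith [norm_nonneg (∑ k ∈ range L, eR (k * θ))]

/-- A uniform bound for the partial sums of `(2LD / (D + Lj))²`, by telescoping. -/
lemma sum_sq_div_le {L D : ℝ} (hL : 0 < L) (hD : 0 < D) (n : ℕ) :
    ∑ j ∈ range n, (2 * L * D / (D + L * j)) ^ 2 ≤ 4 * L ^ 2 + 4 * L * D := by
  have key : ∀ n : ℕ, ∑ j ∈ range (n + 1), (2 * L * D / (D + L * j)) ^ 2 ≤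
      4 * L ^ 2 + 4 * L * D - 4 * L * D ^ 2 / (D + L * n) := by
    intro n
    induction n with
    | zero =>
      simp only [zero_add, sum_range_one, Nat.cast_zero, mul_zero, add_zero]
      apply le_of_eq
      field_simp
      ring
    | succ n ih =>
      rw [sum_range_succ]
      have hP : 0 < D + L * n := by positivity
      have hQ : 0 < D + L * (n + 1) := by positivity
      have : (2 * L * D / (D + L * ((n + 1 : ℕ) : ℝ))) ^ 2 ≤
          4 * L * D ^ 2 / (D + L * n) - 4 * L * D ^ 2 / (D + L * ((n + 1 : ℕ) : ℝ)) := by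
        push_cast
        rw [div_sub_div _ _ hP.ne' hQ.ne', div_pow, div_le_div_iff₀ (by positivity) (by positivity)]
        have : 4 * L * D ^ 2 * (D + L * (n + 1)) - (D + L * n) * (4 * L * D ^ 2) =
          (2 * L * D) ^ 2 := by ring
        rw [this, sq (D + L * (n + 1))]
        gcongr
        linarith
      linarith
  rcases n with _ | n
  · simp; positivity
  · have : 0 ≤ 4 * L * D ^ 2 / (D + L * n) := by positivity
    linarith [key n]

lemma sum_natAbs_sub_le (s : Finset ℕ) (h : ℕ) (f : ℕ → ℝ) (hf : ∀ j, 0 ≤ f j) {B : ℝ}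
    (hB : ∀ n, ∑ j ∈ range n, f j ≤ B) :
    ∑ i ∈ s, f ((h : ℤ) - i).natAbs ≤ 2 * B := by
  have one : ∀ t : Finset ℕ, Set.InjOn (fun i : ℕ => ((h : ℤ) - i).natAbs) t →
      ∑ i ∈ t, f ((h : ℤ) - i).natAbs ≤ B := by
    intro t ht
    rw [← sum_image (g := fun i : ℕ => ((h : ℤ) - i).natAbs) ht]
    obtain ⟨n, hn⟩ := exists_nat_subset_range (t.image fun i : ℕ => ((h : ℤ) - i).natAbs)
    exact (sum_le_sum_of_subset_of_nonneg hn fun _ _ _ => hf _).trans (hB n)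
  rw [← sum_filter_add_sum_filter_not s (· ≤ h)]
  have h1 := one {i ∈ s | i ≤ h} (by
    intro x hx y hy hxy
    simp only [coe_filter, Set.mem_ofPred_eq] at hx hy hxy
    omega)
  have h2 := one {i ∈ s | ¬ i ≤ h} (by
    intro x hx y hy hxy
    simp only [coe_filter, Set.mem_ofPred_eq] at hx hy hxy
    omega)
  linarith

/-- The dual large sieve inequality for frequencies indexed by integers. -/
lemma dual_large_sieve (s : Finset ℕ) (θ : ℕ → ℝ) {D : ℝ} (hD : 0 < D) {K : ℕ} (hK : 0 < K)
    (hθ : ∀ i ∈ s, ∀ j ∈ s, |θ i - θ j| ≤ 1 / 2)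
    (hsep : ∀ i ∈ s, ∀ j ∈ s, |(i : ℝ) - j| ≤ 2 * D * |θ i - θ j|)
    (a : ℕ → ℂ) (ha : ∀ i ∈ s, ‖a i‖ ≤ 1) :
    ∑ l ∈ range K, ‖∑ i ∈ s, a i * eR (l * θ i)‖ ^ 2 ≤ #s * (32 * K + 16 * D) := by
  set F : ℝ → ℂ := fun t => ∑ i ∈ s, a i * eR (t * θ i) with hF
  set G : ℕ → ℕ → ℂ := fun i j => ∑ k ∈ range (2 * K), eR (k * (θ i - θ j)) with hG
  have hKr : (0 : ℝ) < K := by exact_mod_cast hK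
  have h1 : (K : ℝ) * ∑ l ∈ range K, ‖F l‖ ^ 2 ≤
      ∑ p ∈ range (2 * K) ×ˢ range (2 * K), ‖F ((p.1 : ℝ) - p.2)‖ ^ 2 := by
    have e : (K : ℝ) * ∑ l ∈ range K, ‖F l‖ ^ 2 =
        ∑ p ∈ range K ×ˢ range K, ‖F (((p.1 + p.2 : ℕ) : ℝ) - p.2)‖ ^ 2 := by
      rw [sum_product_right]
      simp
    rw [e]
    have inj : Set.InjOn (fun p : ℕ × ℕ => (p.1 + p.2, p.2))
        (range K ×ˢ range K : Finset (ℕ × ℕ)) := by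
      rintro ⟨x, y⟩ _ ⟨z, w⟩ _ h
      simp only [Prod.mk.injEq] at h ⊢
      omega
    rw [← sum_image (f := fun p : ℕ × ℕ => ‖F ((p.1 : ℝ) - p.2)‖ ^ 2) inj]
    refine sum_le_sum_of_subset_of_nonneg ?_ fun _ _ _ => by positivity
    intro p hp
    simp only [mem_image, mem_product, mem_range, Prod.exists] at hp ⊢
    obtain ⟨x, y, ⟨hx, hy⟩, rfl⟩ := hp
    constructor <;> simp only <;> omega
  have h2 : ((∑ p ∈ range (2 * K) ×ˢ range (2 * K), ‖F ((p.1 : ℝ) - p.2)‖ ^ 2 : ℝ) : ℂ) =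
      ∑ i ∈ s, ∑ j ∈ s, a i * (starRingEnd ℂ) (a j) * (G i j * (starRingEnd ℂ) (G i j)) := by
    have e1 : ∀ p : ℕ × ℕ, ((‖F ((p.1 : ℝ) - p.2)‖ ^ 2 : ℝ) : ℂ) = ∑ i ∈ s, ∑ j ∈ s,
        a i * (starRingEnd ℂ) (a j) *
          (eR (p.1 * (θ i - θ j)) * (starRingEnd ℂ) (eR (p.2 * (θ i - θ j)))) := by
      intro p
      have : ((‖F ((p.1 : ℝ) - p.2)‖ ^ 2 : ℝ) : ℂ) =
          F ((p.1 : ℝ) - p.2) * (starRingEnd ℂ) (F ((p.1 : ℝ) - p.2)) := by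
        rw [Complex.mul_conj, Complex.normSq_eq_norm_sq]
      rw [this, hF]
      simp only [map_sum, map_mul, sum_mul_sum, conj_eR]
      refine sum_congr rfl fun i _ => sum_congr rfl fun j _ => ?_
      have : eR (((p.1 : ℝ) - p.2) * θ i) * eR (-(((p.1 : ℝ) - p.2) * θ j)) =
          eR (p.1 * (θ i - θ j)) * eR (-(p.2 * (θ i - θ j))) := by
        rw [← eR_add, ← eR_add]; ring_nf
      rw [mul_mul_mul_comm, this]
    rw [Complex.ofReal_sum, sum_congr rfl fun p _ => e1 p, sum_comm]
    refine sum_congr rfl fun i _ => ?_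
    rw [sum_comm]
    refine sum_congr rfl fun j _ => ?_
    rw [← mul_sum, hG]
    simp only [map_sum, sum_mul_sum]
    rw [sum_product]
  have h3 : ∑ p ∈ range (2 * K) ×ˢ range (2 * K), ‖F ((p.1 : ℝ) - p.2)‖ ^ 2 ≤
      ∑ i ∈ s, ∑ j ∈ s, ‖G i j‖ ^ 2 := by
    have e : ∑ p ∈ range (2 * K) ×ˢ range (2 * K), ‖F ((p.1 : ℝ) - p.2)‖ ^ 2 =
        ‖((∑ p ∈ range (2 * K) ×ˢ range (2 * K), ‖F ((p.1 : ℝ) - p.2)‖ ^ 2 : ℝ) : ℂ)‖ := by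
      rw [Complex.norm_real, Real.norm_of_nonneg (sum_nonneg fun _ _ => by positivity)]
    rw [e, h2]
    refine (norm_sum_le _ _).trans (sum_le_sum fun i hi => ?_)
    refine (norm_sum_le _ _).trans (sum_le_sum fun j hj => ?_)
    rw [norm_mul, norm_mul, norm_mul, RCLike.norm_conj, RCLike.norm_conj, ← sq]
    exact mul_le_of_le_one_left (by positivity) (mul_le_one₀ (ha i hi) (norm_nonneg _) (ha j hj))
  have h4 : ∀ i ∈ s, ∑ j ∈ s, ‖G i j‖ ^ 2 ≤
      2 * (4 * (2 * K : ℝ) ^ 2 + 4 * (2 * K) * D) := by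
    intro i hi
    refine le_trans (sum_le_sum fun j hj => ?_) (sum_natAbs_sub_le s i
      (fun j => (2 * (2 * K : ℝ) * D / (D + 2 * K * j)) ^ 2) (fun _ => by positivity)
      (sum_sq_div_le (by positivity) hD))
    refine pow_le_pow_left₀ (norm_nonneg _) ?_ 2
    have c1 : ‖G i j‖ ≤ 2 * K := by
      have := norm_sum_eR_le_card (2 * K) (θ i - θ j)
      push_cast at this
      exact this
    have c2 : ‖G i j‖ * (2 * |θ i - θ j|) ≤ 1 := norm_sum_eR_mul_le _ (hθ i hi j hj)
    have c3 := hsep i hi j hj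
    have c4 : ((((i : ℤ) - j).natAbs : ℕ) : ℝ) = |(i : ℝ) - j| := by
      rw [Nat.cast_natAbs]; push_cast; rfl
    rw [c4, le_div_iff₀ (by positivity)]
    have c5 : ‖G i j‖ * |(i : ℝ) - j| ≤ D := by
      calc ‖G i j‖ * |(i : ℝ) - j| ≤ ‖G i j‖ * (2 * D * |θ i - θ j|) := by gcongr
        _ = D * (‖G i j‖ * (2 * |θ i - θ j|)) := by ring
        _ ≤ D * 1 := by gcongr
        _ = D := mul_one D
    nlinarith
  have h5 := h1.trans (h3.trans (sum_le_sum h4))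
  rw [sum_const, nsmul_eq_mul] at h5
  refine le_of_mul_le_mul_left (h5.trans (le_of_eq ?_)) hKr
  ring

lemma abs_sub_le_mul_abs_log_sub {u v B : ℝ} (hu : 0 < u) (hv : 0 < v) (huB : u ≤ B)
    (hvB : v ≤ B) : |u - v| ≤ B * |Real.log u - Real.log v| := by
  wlog h : v ≤ u generalizing u v
  · rw [abs_sub_comm, abs_sub_comm (Real.log u)]
    exact this hv hu hvB huB (not_le.1 h).le
  have h1 := Real.log_le_sub_one_of_pos (div_pos hv hu)
  rw [Real.log_div hv.ne' hu.ne'] at h1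
  have h2 : Real.log v ≤ Real.log u := Real.log_le_log hv h
  rw [abs_of_nonneg (sub_nonneg.2 h), abs_of_nonneg (sub_nonneg.2 h2)]
  have h3 : u * (v / u) = v := by field_simp
  nlinarith

lemma mul_abs_log_sub_le_abs_sub {u v b : ℝ} (hb : 0 < b) (hu : b ≤ u) (hv : b ≤ v) :
    b * |Real.log u - Real.log v| ≤ |u - v| := by
  wlog h : v ≤ u generalizing u v
  · rw [abs_sub_comm, abs_sub_comm u]
    exact this hv hu (not_le.1 h).le
  have hu0 := hb.trans_le hu
  have hv0 := hb.trans_le hv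
  have h1 := Real.log_le_sub_one_of_pos (div_pos hu0 hv0)
  rw [Real.log_div hu0.ne' hv0.ne'] at h1
  have h2 : Real.log v ≤ Real.log u := Real.log_le_log hv0 h
  rw [abs_of_nonneg (sub_nonneg.2 h), abs_of_nonneg (sub_nonneg.2 h2)]
  have h3 : v * (u / v) = u := by field_simp
  nlinarith

/-- A finite family of `σ`-separated reals has at most `1 + 2ρ/σ` members in an interval of
length `2ρ`. -/
lemma card_le_of_separated {ι : Type*} (S : Finset ι) (f : ι → ℝ) {σ ρ t : ℝ} (hσ : 0 < σ)
    (hρ : 0 ≤ ρ) (hf : ∀ p ∈ S, |f p - t| ≤ ρ)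
    (hsep : ∀ p ∈ S, ∀ q ∈ S, p ≠ q → σ ≤ |f p - f q|) :
    (#S : ℝ) ≤ 1 + 2 * ρ / σ := by
  have hnn : ∀ p ∈ S, 0 ≤ (f p - (t - ρ)) / σ := fun p hp =>
    div_nonneg (by linarith [(abs_le.1 (hf p hp)).1]) hσ.le
  have hcard : #S ≤ #(range (⌊2 * ρ / σ⌋₊ + 1)) := by
    refine card_le_card_of_injOn (fun p => ⌊(f p - (t - ρ)) / σ⌋₊) (fun p hp => ?_) ?_
    · simp only [coe_range, Set.mem_Iio, Nat.lt_add_one_iff]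
      refine Nat.floor_le_floor ?_
      gcongr
      linarith [(abs_le.1 (hf p hp)).2]
    · intro p hp q hq hpq
      by_contra hne
      have h1 := hsep p hp q hq hne
      simp only at hpq
      have a1 := Nat.floor_le (hnn p hp)
      have a2 := Nat.lt_floor_add_one ((f p - (t - ρ)) / σ)
      have b1 := Nat.floor_le (hnn q hq)
      have b2 := Nat.lt_floor_add_one ((f q - (t - ρ)) / σ)
      rw [hpq] at a1 a2
      have h2 : |(f p - (t - ρ)) / σ - (f q - (t - ρ)) / σ| < 1 := by
        rw [abs_lt]; constructor <;> linarith
      rw [← sub_div, abs_div, abs_of_pos hσ, div_lt_one hσ] at h2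
      have : f p - (t - ρ) - (f q - (t - ρ)) = f p - f q := by ring
      rw [this] at h2
      linarith
  rw [card_range] at hcard
  have h3 : (#S : ℝ) ≤ ⌊2 * ρ / σ⌋₊ + 1 := by exact_mod_cast hcard
  linarith [Nat.floor_le (show 0 ≤ 2 * ρ / σ by positivity)]

lemma mem_Ioc_floor {N : ℝ} (hN : 1 ≤ N) {n : ℕ} (hn : n ∈ Ioc ⌊N⌋₊ ⌊2 * N⌋₊) :
    N < n ∧ (n : ℝ) ≤ 2 * N := by
  rw [mem_Ioc] at hn
  exact ⟨Nat.lt_of_floor_lt hn.1, (Nat.le_floor_iff (by linarith)).1 hn.2⟩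

/-- Pairs with the same gcd and proportional entries coincide. -/
lemma eq_of_gcd_eq_of_mul_eq {x y z w d : ℕ} (hd : 0 < d) (h1 : x.gcd y = d) (h2 : z.gcd w = d)
    (h : x * w = z * y) (hy : 0 < y) : x = z ∧ y = w := by
  obtain ⟨a, b, hab, rfl, rfl⟩ : ∃ a b, Nat.Coprime a b ∧ x = a * d ∧ y = b * d := by
    obtain ⟨a, b, hab, hx, hy⟩ := Nat.exists_coprime x y
    rw [h1] at hx hy
    exact ⟨a, b, hab, hx, hy⟩
  obtain ⟨c, e, hce, rfl, rfl⟩ : ∃ a b, Nat.Coprime a b ∧ z = a * d ∧ w = b * d := by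
    obtain ⟨a, b, hab, hx, hy⟩ := Nat.exists_coprime z w
    rw [h2] at hx hy
    exact ⟨a, b, hab, hx, hy⟩
  have h3 : a * e = c * b := by
    have : (a * e) * (d * d) = (c * b) * (d * d) := by linarith
    exact Nat.eq_of_mul_eq_mul_right (by positivity) this
  have h4 : a = c := Nat.dvd_antisymm
    (hab.dvd_of_dvd_mul_right (h3 ▸ dvd_mul_right a e))
    (hce.dvd_of_dvd_mul_right (h3 ▸ dvd_mul_right c b))
  subst h4
  have hb : 0 < b := Nat.pos_of_mul_pos_right hy
  rcases Nat.eq_zero_or_pos a with ha | ha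
  · subst ha
    simp only [Nat.coprime_zero_left] at hab hce
    simp [hab, hce]
  · have := Nat.eq_of_mul_eq_mul_left ha h3
    simp [this]

/-- The pairs of integers in `(N, 2N]` with gcd `d`. -/
noncomputable def gcdPairs (N : ℝ) (d : ℕ) : Finset (ℕ × ℕ) :=
  {p ∈ Ioc ⌊N⌋₊ ⌊2 * N⌋₊ ×ˢ Ioc ⌊N⌋₊ ⌊2 * N⌋₊ | p.1.gcd p.2 = d}

/-- The logarithm of the ratio of two integers. -/
noncomputable def logRatio (p : ℕ × ℕ) : ℝ := Real.log p.1 - Real.log p.2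

lemma card_gcdPairs_le {N : ℝ} (hN : 1 ≤ N) {d : ℕ} (hd : 0 < d) :
    (#(gcdPairs N d) : ℝ) ≤ 4 * (N / d) ^ 2 := by
  have h1 : gcdPairs N d ⊆ {n ∈ Ioc 0 ⌊2 * N⌋₊ | d ∣ n} ×ˢ {n ∈ Ioc 0 ⌊2 * N⌋₊ | d ∣ n} := by
    intro p hp
    simp only [gcdPairs, mem_filter, mem_product, mem_Ioc] at hp ⊢
    obtain ⟨⟨h1, h2⟩, rfl⟩ := hp
    exact ⟨⟨⟨by omega, h1.2⟩, Nat.gcd_dvd_left _ _⟩, ⟨by omega, h2.2⟩, Nat.gcd_dvd_right _ _⟩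
  have h2 := card_le_card h1
  rw [card_product, Nat.Ioc_filter_dvd_card_eq_div] at h2
  have h3 : ((⌊2 * N⌋₊ / d : ℕ) : ℝ) ≤ 2 * (N / d) := by
    refine Nat.cast_div_le.trans ?_
    rw [← mul_div_assoc]
    gcongr
    exact Nat.floor_le (by linarith)
  calc (#(gcdPairs N d) : ℝ) ≤ ((⌊2 * N⌋₊ / d : ℕ) : ℝ) * ((⌊2 * N⌋₊ / d : ℕ) : ℝ) := by
        exact_mod_cast h2
    _ ≤ (2 * (N / d)) * (2 * (N / d)) := by gcongr
    _ = _ := by ring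

lemma logRatio_separated {N : ℝ} (hN : 1 ≤ N) {d : ℕ} (hd : 0 < d) {p q : ℕ × ℕ}
    (hp : p ∈ gcdPairs N d) (hq : q ∈ gcdPairs N d) (hne : p ≠ q) :
    d ^ 2 / (4 * N ^ 2) ≤ |logRatio p - logRatio q| := by
  obtain ⟨x, y⟩ := p
  obtain ⟨z, w⟩ := q
  simp only [gcdPairs, mem_filter, mem_product] at hp hq
  obtain ⟨⟨hx, hy⟩, hg⟩ := hp
  obtain ⟨⟨hz, hw⟩, hg'⟩ := hq
  obtain ⟨hx1, hx2⟩ := mem_Ioc_floor hN hx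
  obtain ⟨hy1, hy2⟩ := mem_Ioc_floor hN hy
  obtain ⟨hz1, hz2⟩ := mem_Ioc_floor hN hz
  obtain ⟨hw1, hw2⟩ := mem_Ioc_floor hN hw
  have hN0 : 0 < N := by linarith
  have hx0 := hN0.trans hx1
  have hy0 := hN0.trans hy1
  have hz0 := hN0.trans hz1
  have hw0 := hN0.trans hw1
  have hne' : x * w ≠ z * y := fun h => hne <| by
    obtain ⟨h1, h2⟩ := eq_of_gcd_eq_of_mul_eq hd hg hg' h (by exact_mod_cast hy0)
    rw [h1, h2]
  have hdvd : ((d : ℤ) ^ 2) ∣ (x * w : ℤ) - z * y := by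
    have hxd : d ∣ x := hg ▸ Nat.gcd_dvd_left _ _
    have hyd : d ∣ y := hg ▸ Nat.gcd_dvd_right _ _
    have hzd : d ∣ z := hg' ▸ Nat.gcd_dvd_left _ _
    have hwd : d ∣ w := hg' ▸ Nat.gcd_dvd_right _ _
    rw [sq]
    exact dvd_sub (by exact_mod_cast mul_dvd_mul hxd hwd) (by exact_mod_cast mul_dvd_mul hzd hyd)
  have hge : (d : ℤ) ^ 2 ≤ |(x * w : ℤ) - z * y| :=
    Int.le_of_dvd (abs_pos.2 (sub_ne_zero.2 (by exact_mod_cast hne'))) ((dvd_abs _ _).2 hdvd)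
  have hge' : (d : ℝ) ^ 2 ≤ |(x * w : ℝ) - z * y| := by exact_mod_cast hge
  have hlog := abs_sub_le_mul_abs_log_sub (u := x * w) (v := z * y) (B := 4 * N ^ 2)
    (by positivity) (by positivity) (by nlinarith) (by nlinarith)
  rw [Real.log_mul hx0.ne' hw0.ne', Real.log_mul hz0.ne' hy0.ne'] at hlog
  have e : logRatio (x, y) - logRatio (z, w) =
      Real.log x + Real.log w - (Real.log z + Real.log y) := by
    simp only [logRatio]; ring
  rw [e, div_le_iff₀' (by positivity)]
  exact hge'.trans hlog

lemma card_gcdPairs_near_le {N : ℝ} (hN : 1 ≤ N) {d : ℕ} (hd : 0 < d) {γ δ : ℝ} (hγ : γ ≠ 0)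
    (hδ : 0 ≤ δ) (t : ℝ) :
    (#{p ∈ gcdPairs N d | |t + γ * logRatio p| ≤ δ} : ℝ) ≤ 1 + 8 * δ / |γ| * (N / d) ^ 2 := by
  have hd' : (0 : ℝ) < d := by exact_mod_cast hd
  have hγ' := abs_pos.2 hγ
  refine (card_le_of_separated _ logRatio (σ := d ^ 2 / (4 * N ^ 2)) (ρ := δ / |γ|) (t := -t / γ)
    (by positivity) (by positivity) (fun p hp => ?_) fun p hp q hq hne =>
    logRatio_separated hN hd (mem_filter.1 hp).1 (mem_filter.1 hq).1 hne).trans (le_of_eq ?_)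
  · have h := (mem_filter.1 hp).2
    have e : (logRatio p - -t / γ) * γ = t + γ * logRatio p := by
      field_simp
      ring
    rwa [le_div_iff₀ hγ', ← abs_mul, e]
  · field_simp
    ring

lemma card_filter_product_le {ι κ : Type*} (A : Finset ι) (B : Finset κ) (P : ι → κ → Prop)
    [∀ i j, Decidable (P i j)] {a b : ℝ} (hb : 0 ≤ b) (hA : (#A : ℝ) ≤ a)
    (hB : ∀ i ∈ A, (#{j ∈ B | P i j} : ℝ) ≤ b) :
    (#{x ∈ A ×ˢ B | P x.1 x.2} : ℝ) ≤ a * b := by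
  have h1 : #{x ∈ A ×ˢ B | P x.1 x.2} = ∑ i ∈ A, #{j ∈ B | P i j} := by
    simp only [card_filter, sum_product]
  rw [h1]
  push_cast
  refine (sum_le_sum hB).trans ?_
  rw [sum_const, nsmul_eq_mul]
  gcongr

lemma card_near_gcd_le {M N : ℝ} (hM : 1 ≤ M) (hN : 1 ≤ N) {β γ δ : ℝ} (hβ : β ≠ 0) (hγ : γ ≠ 0)
    (hδ : 0 ≤ δ) {d e : ℕ} (hd : 0 < d) (he : 0 < e) :
    (#{x ∈ gcdPairs M d ×ˢ gcdPairs N e | |β * logRatio x.1 + γ * logRatio x.2| ≤ δ} : ℝ) ≤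
      (4 * (M * N) + 32 * δ * (1 / |β| + 1 / |γ|) * (M * N) ^ 2) * ((d : ℝ)⁻¹ * (e : ℝ)⁻¹) := by
  have hd' : (1 : ℝ) ≤ d := by exact_mod_cast hd
  have he' : (1 : ℝ) ≤ e := by exact_mod_cast he
  have hd0 : (0 : ℝ) < d := by linarith
  have he0 : (0 : ℝ) < e := by linarith
  have hβ' := abs_pos.2 hβ
  have hγ' := abs_pos.2 hγ
  set x := M / d with hx
  set y := N / e with hy
  have hx0 : 0 < x := by positivity
  have hy0 : 0 < y := by positivity
  have h1 := card_filter_product_le (gcdPairs M d) (gcdPairs N e)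
    (fun p q => |β * logRatio p + γ * logRatio q| ≤ δ)
    (b := 1 + 8 * δ / |γ| * y ^ 2) (by positivity) (card_gcdPairs_le hM hd)
    fun p _ => card_gcdPairs_near_le hN he hγ hδ _
  have h2 := card_filter_product_le (gcdPairs N e) (gcdPairs M d)
    (fun q p => |γ * logRatio q + β * logRatio p| ≤ δ)
    (b := 1 + 8 * δ / |β| * x ^ 2) (by positivity) (card_gcdPairs_le hN he)
    fun p _ => card_gcdPairs_near_le hM hd hβ hδ _
  have hswap : #{z ∈ gcdPairs N e ×ˢ gcdPairs M d | |γ * logRatio z.1 + β * logRatio z.2| ≤ δ} =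
      #{z ∈ gcdPairs M d ×ˢ gcdPairs N e | |β * logRatio z.1 + γ * logRatio z.2| ≤ δ} := by
    refine card_bij' (fun z _ => z.swap) (fun z _ => z.swap) ?_ ?_ ?_ ?_ <;>
      simp +contextual [add_comm]
  rw [hswap] at h2
  set c : ℝ := ((#{z ∈ gcdPairs M d ×ˢ gcdPairs N e |
    |β * logRatio z.1 + γ * logRatio z.2| ≤ δ} : ℕ) : ℝ)
  have h3 : c ≤ 4 * (x * y) + 32 * δ * (1 / |β| + 1 / |γ|) * (x * y) ^ 2 := by
    have e1 : 4 * x ^ 2 * (1 + 8 * δ / |γ| * y ^ 2) =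
        4 * x ^ 2 + 32 * δ * (1 / |γ|) * (x * y) ^ 2 := by ring
    have e2 : 4 * y ^ 2 * (1 + 8 * δ / |β| * x ^ 2) =
        4 * y ^ 2 + 32 * δ * (1 / |β|) * (x * y) ^ 2 := by ring
    rw [e1] at h1
    rw [e2] at h2
    have p1 : 0 ≤ 32 * δ * (1 / |γ|) * (x * y) ^ 2 := by positivity
    have p2 : 0 ≤ 32 * δ * (1 / |β|) * (x * y) ^ 2 := by positivity
    have e3 : 32 * δ * (1 / |β| + 1 / |γ|) * (x * y) ^ 2 =
      32 * δ * (1 / |β|) * (x * y) ^ 2 + 32 * δ * (1 / |γ|) * (x * y) ^ 2 := by ring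
    rw [e3]
    rcases le_total x y with h | h <;> nlinarith
  have hxy : x * y = M * N * ((d : ℝ)⁻¹ * (e : ℝ)⁻¹) := by
    rw [hx, hy]; field_simp
  have hu : (d : ℝ)⁻¹ * (e : ℝ)⁻¹ ≤ 1 :=
    mul_le_one₀ (inv_le_one_of_one_le₀ hd') (by positivity) (inv_le_one_of_one_le₀ he')
  have hu0 : 0 < (d : ℝ)⁻¹ * (e : ℝ)⁻¹ := by positivity
  rw [hxy] at h3
  set u := (d : ℝ)⁻¹ * (e : ℝ)⁻¹
  have h4 : (M * N * u) ^ 2 ≤ (M * N) ^ 2 * u := by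
    rw [mul_pow]
    gcongr
    nlinarith
  calc c ≤ _ := h3
    _ ≤ 4 * (M * N * u) + 32 * δ * (1 / |β| + 1 / |γ|) * ((M * N) ^ 2 * u) := by gcongr
    _ = _ := by ring

lemma sum_inv_Icc_floor_le {M : ℝ} (hM : 1 ≤ M) :
    ∑ d ∈ Icc 1 ⌊2 * M⌋₊, (d : ℝ)⁻¹ ≤ 1 + Real.log (2 * M) := by
  have h := harmonic_floor_le_one_add_log (2 * M) (by linarith)
  rw [harmonic_eq_sum_Icc] at h
  push_cast at h
  exact h

/-- The number of quadruples `m, m' ∼ M`, `n, n' ∼ N` with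
`|β log (m/m') + γ log (n/n')| ≤ δ`. -/
lemma card_near_quadruples_le {M N : ℝ} (hM : 1 ≤ M) (hN : 1 ≤ N) {β γ δ : ℝ} (hβ : β ≠ 0)
    (hγ : γ ≠ 0) (hδ : 0 ≤ δ) :
    (#{x ∈ (Ioc ⌊M⌋₊ ⌊2 * M⌋₊ ×ˢ Ioc ⌊M⌋₊ ⌊2 * M⌋₊) ×ˢ (Ioc ⌊N⌋₊ ⌊2 * N⌋₊ ×ˢ Ioc ⌊N⌋₊ ⌊2 * N⌋₊) |
        |β * logRatio x.1 + γ * logRatio x.2| ≤ δ} : ℝ) ≤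
      (4 * (M * N) + 32 * δ * (1 / |β| + 1 / |γ|) * (M * N) ^ 2) *
        ((1 + Real.log (2 * M)) * (1 + Real.log (2 * N))) := by
  have hgcd : ∀ {P : ℝ} {x y : ℕ}, x ∈ Ioc ⌊P⌋₊ ⌊2 * P⌋₊ → x.gcd y ∈ Icc 1 ⌊2 * P⌋₊ := by
    intro P x y hx
    rw [mem_Ioc] at hx
    rw [mem_Icc]
    have : 0 < x := by omega
    exact ⟨Nat.gcd_pos_of_pos_left _ this, (Nat.gcd_le_left _ this).trans hx.2⟩
  rw [card_eq_sum_card_fiberwise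
    (f := fun x : (ℕ × ℕ) × (ℕ × ℕ) => (x.1.1.gcd x.1.2, x.2.1.gcd x.2.2))
    (t := Icc 1 ⌊2 * M⌋₊ ×ˢ Icc 1 ⌊2 * N⌋₊)]
  · push_cast
    calc _ ≤ ∑ z ∈ Icc 1 ⌊2 * M⌋₊ ×ˢ Icc 1 ⌊2 * N⌋₊,
          (4 * (M * N) + 32 * δ * (1 / |β| + 1 / |γ|) * (M * N) ^ 2) *
            ((z.1 : ℝ)⁻¹ * (z.2 : ℝ)⁻¹) := by
          refine sum_le_sum fun z hz => ?_
          rw [mem_product, mem_Icc, mem_Icc] at hz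
          refine le_trans ?_ (card_near_gcd_le hM hN hβ hγ hδ hz.1.1 hz.2.1)
          norm_cast
          refine card_le_card fun x hx => ?_
          simp only [gcdPairs, mem_filter, mem_product, Prod.ext_iff] at hx ⊢
          tauto
      _ = (4 * (M * N) + 32 * δ * (1 / |β| + 1 / |γ|) * (M * N) ^ 2) *
            ((∑ d ∈ Icc 1 ⌊2 * M⌋₊, (d : ℝ)⁻¹) * ∑ e ∈ Icc 1 ⌊2 * N⌋₊, (e : ℝ)⁻¹) := by
          rw [← mul_sum, sum_mul_sum, sum_product]
      _ ≤ _ := by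
          have := sum_inv_Icc_floor_le hM
          have := sum_inv_Icc_floor_le hN
          have : 0 ≤ Real.log (2 * M) := Real.log_nonneg (by linarith)
          gcongr
  · intro x hx
    simp only [coe_filter, Set.mem_ofPred_eq, mem_product] at hx
    exact mem_coe.2 (mem_product.2 ⟨hgcd hx.1.1.1, hgcd hx.1.2.1⟩)

lemma rpow_mem_Icc_of_mem_Icc {r : ℝ} (h1 : 1 ≤ r) (h2 : r ≤ 2) (α : ℝ) :
    ((2 : ℝ) ^ |α|)⁻¹ ≤ r ^ α ∧ r ^ α ≤ 2 ^ |α| := by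
  constructor
  · rw [← Real.rpow_neg (by norm_num)]
    calc (2 : ℝ) ^ (-|α|) ≤ r ^ (-|α|) :=
          Real.rpow_le_rpow_of_nonpos (by linarith) h2 (by simp)
      _ ≤ r ^ α := Real.rpow_le_rpow_of_exponent_le h1 (neg_abs_le α)
  · calc r ^ α ≤ r ^ |α| := Real.rpow_le_rpow_of_exponent_le h1 (le_abs_self α)
      _ ≤ 2 ^ |α| := Real.rpow_le_rpow (by linarith) h2 (abs_nonneg α)

lemma div_mem_Icc_of_mem_Ioc_floor {N : ℝ} (hN : 1 ≤ N) {n : ℕ}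
    (hn : n ∈ Ioc ⌊N⌋₊ ⌊2 * N⌋₊) : 1 ≤ (n : ℝ) / N ∧ (n : ℝ) / N ≤ 2 := by
  obtain ⟨h1, h2⟩ := mem_Ioc_floor hN hn
  have : 0 < N := by linarith
  rw [le_div_iff₀ this, div_le_iff₀ this]
  constructor <;> linarith

lemma card_Ioc_floor_le {N : ℝ} (hN : 1 ≤ N) : (#(Ioc ⌊N⌋₊ ⌊2 * N⌋₊) : ℝ) ≤ 2 * N := by
  rw [Nat.card_Ioc]
  calc ((⌊2 * N⌋₊ - ⌊N⌋₊ : ℕ) : ℝ) ≤ (⌊2 * N⌋₊ : ℕ) := by exact_mod_cast Nat.sub_le _ _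
    _ ≤ 2 * N := Nat.floor_le (by linarith)

/-- Separation of the points `(h/H)^α`, `h ∼ H`. -/
lemma abs_sub_le_abs_rpow_sub {H : ℝ} (hH : 1 ≤ H) {α : ℝ} (hα : α ≠ 0) {i j : ℕ}
    (hi : i ∈ Ioc ⌊H⌋₊ ⌊2 * H⌋₊) (hj : j ∈ Ioc ⌊H⌋₊ ⌊2 * H⌋₊) :
    |(i : ℝ) - j| ≤ 2 * H * 2 ^ |α| / |α| * |((i : ℝ) / H) ^ α - ((j : ℝ) / H) ^ α| := by
  have hH0 : 0 < H := by linarith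
  obtain ⟨hi1, hi2⟩ := mem_Ioc_floor hH hi
  obtain ⟨hj1, hj2⟩ := mem_Ioc_floor hH hj
  have hi0 := hH0.trans hi1
  have hj0 := hH0.trans hj1
  have hα' := abs_pos.2 hα
  obtain ⟨ri1, ri2⟩ := div_mem_Icc_of_mem_Ioc_floor hH hi
  obtain ⟨rj1, rj2⟩ := div_mem_Icc_of_mem_Ioc_floor hH hj
  have h1 := abs_sub_le_mul_abs_log_sub hi0 hj0 hi2 hj2
  have h2 := mul_abs_log_sub_le_abs_sub (b := ((2 : ℝ) ^ |α|)⁻¹) (by positivity)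
    (rpow_mem_Icc_of_mem_Icc ri1 ri2 α).1 (rpow_mem_Icc_of_mem_Icc rj1 rj2 α).1
  rw [Real.log_rpow (by positivity), Real.log_rpow (by positivity),
    Real.log_div hi0.ne' hH0.ne', Real.log_div hj0.ne' hH0.ne', ← mul_sub, abs_mul,
    sub_sub_sub_cancel_right] at h2
  calc |(i : ℝ) - j| ≤ 2 * H * |Real.log i - Real.log j| := h1
    _ = 2 * H * 2 ^ |α| / |α| * (((2 : ℝ) ^ |α|)⁻¹ * (|α| * |Real.log i - Real.log j|)) := by
        field_simp
    _ ≤ _ := by gcongr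

/-- The number of coincidences among the integer parts of `Z (m/M)^β (n/N)^γ`. -/
lemma card_floor_eq_le {M N : ℝ} (hM : 1 ≤ M) (hN : 1 ≤ N) {β γ Z : ℝ} (hβ : β ≠ 0)
    (hγ : γ ≠ 0) (hZ : 0 < Z) :
    (#{p ∈ (Ioc ⌊M⌋₊ ⌊2 * M⌋₊ ×ˢ Ioc ⌊N⌋₊ ⌊2 * N⌋₊) ×ˢ (Ioc ⌊M⌋₊ ⌊2 * M⌋₊ ×ˢ Ioc ⌊N⌋₊ ⌊2 * N⌋₊) |
        ⌊Z * (((p.1.1 : ℝ) / M) ^ β * ((p.1.2 : ℝ) / N) ^ γ)⌋₊ =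
          ⌊Z * (((p.2.1 : ℝ) / M) ^ β * ((p.2.2 : ℝ) / N) ^ γ)⌋₊} : ℝ) ≤
      (4 * (M * N) + 32 * (2 ^ |β| * 2 ^ |γ| / Z) * (1 / |β| + 1 / |γ|) * (M * N) ^ 2) *
        ((1 + Real.log (2 * M)) * (1 + Real.log (2 * N))) := by
  refine le_trans ?_ (card_near_quadruples_le hM hN hβ hγ
    (δ := 2 ^ |β| * 2 ^ |γ| / Z) (by positivity))
  norm_cast
  refine card_le_card_of_injOn (fun p => ((p.1.1, p.2.1), (p.1.2, p.2.2))) ?_ ?_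
  · rintro ⟨⟨m, n⟩, m', n'⟩ hp
    simp only [coe_filter, Set.mem_ofPred_eq, mem_product] at hp ⊢
    obtain ⟨⟨⟨hm, hn⟩, hm', hn'⟩, hfl⟩ := hp
    refine ⟨⟨⟨hm, hm'⟩, hn, hn'⟩, ?_⟩
    have hM0 : 0 < M := by linarith
    have hN0 : 0 < N := by linarith
    have posr : ∀ {P : ℝ} {k : ℕ}, 1 ≤ P → k ∈ Ioc ⌊P⌋₊ ⌊2 * P⌋₊ → (0 : ℝ) < k :=
      fun hP hk => by linarith [(mem_Ioc_floor hP hk).1]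
    have low : ∀ {x y : ℕ}, x ∈ Ioc ⌊M⌋₊ ⌊2 * M⌋₊ → y ∈ Ioc ⌊N⌋₊ ⌊2 * N⌋₊ →
        ((2 : ℝ) ^ |β| * 2 ^ |γ|)⁻¹ ≤ ((x : ℝ) / M) ^ β * ((y : ℝ) / N) ^ γ := by
      intro x y hx hy
      obtain ⟨a1, a2⟩ := div_mem_Icc_of_mem_Ioc_floor hM hx
      obtain ⟨b1, b2⟩ := div_mem_Icc_of_mem_Ioc_floor hN hy
      rw [mul_inv]
      exact mul_le_mul (rpow_mem_Icc_of_mem_Icc a1 a2 β).1 (rpow_mem_Icc_of_mem_Icc b1 b2 γ).1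
        (by positivity) (by positivity)
    have hlog : ∀ {x y : ℕ}, x ∈ Ioc ⌊M⌋₊ ⌊2 * M⌋₊ → y ∈ Ioc ⌊N⌋₊ ⌊2 * N⌋₊ →
        Real.log (((x : ℝ) / M) ^ β * ((y : ℝ) / N) ^ γ) =
          β * (Real.log x - Real.log M) + γ * (Real.log y - Real.log N) := by
      intro x y hx hy
      have hx0 := posr hM hx
      have hy0 := posr hN hy
      rw [Real.log_mul (by positivity) (by positivity), Real.log_rpow (by positivity),
        Real.log_rpow (by positivity), Real.log_div hx0.ne' hM0.ne', Real.log_div hy0.ne' hN0.ne']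
    have h1 := mul_abs_log_sub_le_abs_sub (by positivity) (low hm hn) (low hm' hn')
    rw [hlog hm hn, hlog hm' hn'] at h1
    have e : β * (Real.log m - Real.log M) + γ * (Real.log n - Real.log N) -
        (β * (Real.log m' - Real.log M) + γ * (Real.log n' - Real.log N)) =
        β * logRatio (m, m') + γ * logRatio (n, n') := by
      simp only [logRatio]; ring
    rw [e] at h1
    set y := ((m : ℝ) / M) ^ β * ((n : ℝ) / N) ^ γ
    set y' := ((m' : ℝ) / M) ^ β * ((n' : ℝ) / N) ^ γ
    have hy0 : 0 ≤ y := le_trans (by positivity) (low hm hn)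
    have hy0' : 0 ≤ y' := le_trans (by positivity) (low hm' hn')
    have h2 : Z * |y - y'| ≤ 1 := by
      have e2 : Z * |y - y'| = |Z * y - Z * y'| := by
        rw [← mul_sub, abs_mul, abs_of_pos hZ]
      rw [e2]
      have a1 := Nat.floor_le (mul_nonneg hZ.le hy0)
      have a2 := Nat.lt_floor_add_one (Z * y)
      have b1 := Nat.floor_le (mul_nonneg hZ.le hy0')
      have b2 := Nat.lt_floor_add_one (Z * y')
      rw [hfl] at a1 a2
      rw [abs_le]
      constructor <;> linarith
    rw [le_div_iff₀ hZ]
    rw [inv_mul_le_iff₀ (by positivity)] at h1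
    calc _ ≤ 2 ^ |β| * 2 ^ |γ| * |y - y'| * Z := by gcongr
      _ = 2 ^ |β| * 2 ^ |γ| * (Z * |y - y'|) := by ring
      _ ≤ 2 ^ |β| * 2 ^ |γ| * 1 := by gcongr
      _ = _ := mul_one _
  · rintro ⟨⟨m, n⟩, m', n'⟩ _ ⟨⟨p, q⟩, p', q'⟩ _ h
    simp only [Prod.mk.injEq] at h ⊢
    tauto

/-- The trivial bound for a trilinear exponential sum. -/
lemma norm_trilinear_le {H M N : ℝ} (hH : 1 ≤ H) (hM : 1 ≤ M) (hN : 1 ≤ N) (a b : ℕ → ℂ)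
    (ha : ∀ h, ‖a h‖ ≤ 1) (hb : ∀ m, ‖b m‖ ≤ 1) (f : ℕ → ℕ → ℕ → ℝ) :
    ‖∑ h ∈ Ioc ⌊H⌋₊ ⌊2 * H⌋₊, ∑ m ∈ Ioc ⌊M⌋₊ ⌊2 * M⌋₊, ∑ n ∈ Ioc ⌊N⌋₊ ⌊2 * N⌋₊,
      a h * b m * eR (f h m n)‖ ≤ 8 * (H * M * N) := by
  calc _ ≤ ∑ h ∈ Ioc ⌊H⌋₊ ⌊2 * H⌋₊, ∑ m ∈ Ioc ⌊M⌋₊ ⌊2 * M⌋₊, ∑ n ∈ Ioc ⌊N⌋₊ ⌊2 * N⌋₊,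
        (1 : ℝ) := by
        refine (norm_sum_le _ _).trans (sum_le_sum fun h _ => ?_)
        refine (norm_sum_le _ _).trans (sum_le_sum fun m _ => ?_)
        refine (norm_sum_le _ _).trans (sum_le_sum fun n _ => ?_)
        rw [norm_mul, norm_mul, norm_eR, mul_one]
        exact mul_le_one₀ (ha h) (norm_nonneg _) (hb m)
    _ = #(Ioc ⌊H⌋₊ ⌊2 * H⌋₊) * (#(Ioc ⌊M⌋₊ ⌊2 * M⌋₊) * #(Ioc ⌊N⌋₊ ⌊2 * N⌋₊)) := by
        simp only [sum_const, nsmul_eq_mul, mul_one]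
    _ ≤ (2 * H) * ((2 * M) * (2 * N)) := by
        gcongr <;> exact card_Ioc_floor_le (by assumption)
    _ = _ := by ring

lemma one_add_log_two_mul_le {M P : ℝ} (hM : 1 ≤ M) (hP : M ≤ P) :
    1 + Real.log (2 * M) ≤ 4 * Real.log (2 + P) := by
  have h1 : Real.log 2 ≤ Real.log (2 + P) := Real.log_le_log (by norm_num) (by linarith)
  have h2 : Real.log M ≤ Real.log (2 + P) := Real.log_le_log (by linarith) (by linarith)
  rw [Real.log_mul (by norm_num) (by linarith)]
  linarith [Real.log_two_gt_d9]

/-- The bound obtained from the double large sieve when `1 ≤ X ≤ MN`. -/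
lemma exists_double_large_sieve_bound {α β γ : ℝ} (hα : α ≠ 0) (hβ : β ≠ 0) (hγ : γ ≠ 0) :
    ∃ C : ℝ, 0 < C ∧ ∀ X H M N : ℝ, 1 ≤ X → 1 ≤ H → 1 ≤ M → 1 ≤ N → X ≤ M * N →
      ∀ a b : ℕ → ℂ, (∀ h, ‖a h‖ ≤ 1) → (∀ m, ‖b m‖ ≤ 1) →
      ‖∑ h ∈ Ioc ⌊H⌋₊ ⌊2 * H⌋₊, ∑ p ∈ Ioc ⌊M⌋₊ ⌊2 * M⌋₊ ×ˢ Ioc ⌊N⌋₊ ⌊2 * N⌋₊, a h * b p.1 *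
          eR (X * (((h : ℝ) / H) ^ α * (((p.1 : ℝ) / M) ^ β * ((p.2 : ℝ) / N) ^ γ)))‖ ≤
        C * Real.log (2 + X * H * M * N) * (M * N * (√H + H / √X)) := by
  set A : ℝ := 2 ^ |α| with hA
  set B : ℝ := 4 * A with hB
  set Y : ℝ := 2 ^ |β| * 2 ^ |γ| with hY
  have hA1 : 1 ≤ A := Real.one_le_rpow (by norm_num) (abs_nonneg _)
  have hY1 : 1 ≤ Y := one_le_mul_of_one_le_of_one_le
    (Real.one_le_rpow (by norm_num) (abs_nonneg _)) (Real.one_le_rpow (by norm_num) (abs_nonneg _))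
  have hB4 : 4 ≤ B := by linarith
  have hα' := abs_pos.2 hα
  have hβ' := abs_pos.2 hβ
  have hγ' := abs_pos.2 hγ
  set c₁ : ℝ := 32 * (Y / B) * (1 / |β| + 1 / |γ|) with hc₁
  set c₂ : ℝ := 128 * B * Y + 32 * (A * B / |α|) with hc₂
  have hc₁0 : 0 < c₁ := by positivity
  have hc₂0 : 0 < c₂ := by positivity
  refine ⟨√(16 * (4 + c₁) * c₂) * Real.exp (2 * Real.pi), by positivity, ?_⟩
  intro X H M N hX hH hM hN hXMN a b ha hb
  have hX0 : 0 < X := by linarith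
  have hH0 : 0 < H := by linarith
  have hM0 : 0 < M := by linarith
  have hN0 : 0 < N := by linarith
  set S := Ioc ⌊H⌋₊ ⌊2 * H⌋₊ with hS
  set T := Ioc ⌊M⌋₊ ⌊2 * M⌋₊ ×ˢ Ioc ⌊N⌋₊ ⌊2 * N⌋₊ with hT
  set x : ℕ → ℝ := fun h => ((h : ℝ) / H) ^ α with hx
  set y : ℕ × ℕ → ℝ := fun p => ((p.1 : ℝ) / M) ^ β * ((p.2 : ℝ) / N) ^ γ with hy
  set θ : ℕ → ℝ := fun h => x h / B with hθ
  set k : ℕ × ℕ → ℕ := fun p => ⌊B * X * y p⌋₊ with hk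
  set K : ℕ := ⌊B * X * Y⌋₊ + 1 with hK
  set Λ := Real.log (2 + X * H * M * N) with hΛ
  have hΛ0 : 0 < Λ := Real.log_pos (by have : 0 < X * H * M * N := by positivity
                                       linarith)
  have hy0 : ∀ p, 0 ≤ y p := fun p => by positivity
  have hx0 : ∀ h, 0 ≤ x h := fun h => by positivity
  have hxA : ∀ h ∈ S, x h ≤ A := fun h hh => by
    obtain ⟨h1, h2⟩ := div_mem_Icc_of_mem_Ioc_floor hH hh
    exact (rpow_mem_Icc_of_mem_Icc h1 h2 α).2
  have hyY : ∀ p ∈ T, y p ≤ Y := fun p hp => by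
    rw [hT, mem_product] at hp
    obtain ⟨h1, h2⟩ := div_mem_Icc_of_mem_Ioc_floor hM hp.1
    obtain ⟨h3, h4⟩ := div_mem_Icc_of_mem_Ioc_floor hN hp.2
    exact mul_le_mul (rpow_mem_Icc_of_mem_Icc h1 h2 β).2 (rpow_mem_Icc_of_mem_Icc h3 h4 γ).2
      (by positivity) (by positivity)
  have hθ0 : ∀ h, 0 ≤ θ h := fun h => div_nonneg (hx0 h) (by linarith)
  have hθ4 : ∀ h ∈ S, θ h ≤ 1 / 4 := fun h hh => by
    rw [hθ]
    simp only
    rw [div_le_iff₀ (by linarith), hB]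
    linarith [hxA h hh]
  have hkK : ∀ p ∈ T, k p < K := fun p hp => by
    rw [hK, Nat.lt_add_one_iff]
    exact Nat.floor_le_floor (by have := hyY p hp; gcongr)
  have hKle : (K : ℝ) ≤ 2 * (B * X * Y) := by
    have h1 : (⌊B * X * Y⌋₊ : ℝ) ≤ B * X * Y := Nat.floor_le (by positivity)
    have h2 : 1 ≤ B * X * Y := one_le_mul_of_one_le_of_one_le
      (one_le_mul_of_one_le_of_one_le (by linarith) hX) hY1
    rw [hK]
    push_cast
    linarith
  have hcard : (#{p ∈ T ×ˢ T | k p.1 = k p.2} : ℝ) ≤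
      16 * (4 + c₁) * ((M * N) ^ 2 / X) * Λ ^ 2 := by
    have h1 := card_floor_eq_le hM hN (Z := B * X) hβ hγ (by positivity)
    refine h1.trans ?_
    have hXHMN : ∀ {P Q R W : ℝ}, 1 ≤ P → 1 ≤ Q → 1 ≤ R → 1 ≤ W → W ≤ P * Q * R * W := by
      intro P Q R W hP hQ hR hW
      exact le_mul_of_one_le_left (by linarith) (one_le_mul_of_one_le_of_one_le
        (one_le_mul_of_one_le_of_one_le hP hQ) hR)
    have l1 : 1 + Real.log (2 * M) ≤ 4 * Λ := by
      refine one_add_log_two_mul_le hM ?_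
      have := hXHMN hX hH hN hM
      linarith
    have l2 : 1 + Real.log (2 * N) ≤ 4 * Λ := one_add_log_two_mul_le hN (hXHMN hX hH hM hN)
    have l3 : 0 ≤ 1 + Real.log (2 * N) := by
      have := Real.log_nonneg (show (1 : ℝ) ≤ 2 * N by linarith)
      linarith
    have l4 : 0 ≤ 1 + Real.log (2 * M) := by
      have := Real.log_nonneg (show (1 : ℝ) ≤ 2 * M by linarith)
      linarith
    have h2 : M * N ≤ (M * N) ^ 2 / X := by
      rw [le_div_iff₀ hX0, sq]
      gcongr
    have h3 : 32 * (2 ^ |β| * 2 ^ |γ| / (B * X)) * (1 / |β| + 1 / |γ|) * (M * N) ^ 2 =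
        c₁ * ((M * N) ^ 2 / X) := by
      rw [hc₁, ← hY]
      field_simp
    rw [h3]
    calc _ ≤ (4 * ((M * N) ^ 2 / X) + c₁ * ((M * N) ^ 2 / X)) * ((4 * Λ) * (4 * Λ)) := by gcongr
      _ = _ := by ring
  have hsieve : ∀ a : ℕ → ℂ, (∀ h ∈ S, ‖a h‖ ≤ 1) →
      ∑ l ∈ range K, ‖∑ i ∈ S, a i * eR (l * θ i)‖ ^ 2 ≤ c₂ * (H * (X + H)) := by
    intro a ha
    have h1 := dual_large_sieve S θ (D := H * (A * B / |α|)) (by positivity) (K := K)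
      (Nat.succ_pos _)
      (fun i hi j hj => by
        have := hθ0 i
        have := hθ0 j
        have := hθ4 i hi
        have := hθ4 j hj
        rw [abs_le]
        constructor <;> linarith)
      (fun i hi j hj => by
        refine (abs_sub_le_abs_rpow_sub hH hα hi hj).trans (le_of_eq ?_)
        have : θ i - θ j = (x i - x j) / B := by rw [hθ]; ring
        rw [this, abs_div, abs_of_pos (by linarith : (0 : ℝ) < B)]
        field_simp
        rfl) a ha
    refine h1.trans ?_
    have h2 : (#S : ℝ) ≤ 2 * H := card_Ioc_floor_le hH
    calc (#S : ℝ) * (32 * K + 16 * (H * (A * B / |α|)))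
        ≤ 2 * H * (32 * (2 * (B * X * Y)) + 16 * (H * (A * B / |α|))) := by gcongr
      _ = 128 * B * Y * (H * X) + 32 * (A * B / |α|) * (H * H) := by ring
      _ ≤ c₂ * (H * X) + c₂ * (H * H) := by
        have p1 : 0 ≤ 32 * (A * B / |α|) := by positivity
        have p2 : 0 ≤ 128 * B * Y := by positivity
        gcongr <;> linarith
      _ = _ := by ring
  set R : ℝ := √(16 * (4 + c₁) * c₂) * Λ * (M * N * (√H + H / √X)) with hR
  have hbil : ∀ (a : ℕ → ℂ) (c : ℕ × ℕ → ℂ), (∀ i ∈ S, ‖a i‖ ≤ 1) → (∀ j ∈ T, ‖c j‖ ≤ 1) →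
      ‖∑ i ∈ S, ∑ j ∈ T, a i * c j * eR (k j * θ i)‖ ≤ R := by
    intro a c ha hc
    have h1 := sq_norm_bilinear_le S T θ k K hkK a c hc
    refine le_of_sq_le_sq ?_ (by positivity)
    have e2 : H + H ^ 2 / X ≤ (√H + H / √X) ^ 2 := by
      have q1 : √H ^ 2 = H := Real.sq_sqrt hH0.le
      have q2 : (H / √X) ^ 2 = H ^ 2 / X := by rw [div_pow, Real.sq_sqrt hX0.le]
      have q3 : 0 ≤ √H * (H / √X) := by positivity
      nlinarith
    calc _ ≤ _ := h1
      _ ≤ (16 * (4 + c₁) * ((M * N) ^ 2 / X) * Λ ^ 2) * (c₂ * (H * (X + H))) := by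
          gcongr
          exact hsieve a ha
      _ = 16 * (4 + c₁) * c₂ * Λ ^ 2 * ((M * N) ^ 2 * (H + H ^ 2 / X)) := by
          field_simp
      _ ≤ 16 * (4 + c₁) * c₂ * Λ ^ 2 * ((M * N) ^ 2 * (√H + H / √X) ^ 2) := by gcongr
      _ = R ^ 2 := by
          rw [hR, mul_pow (√_ * Λ), mul_pow (√_) Λ, Real.sq_sqrt (by positivity),
            mul_pow (M * N) (√H + H / √X)]
  have htw := norm_bilinear_twist_le S T (fun i j => eR (k j * θ i)) R hbil a (fun p => b p.1)
    (fun i _ => ha i) (fun j _ => hb _) θ (fun p => B * X * y p - k p)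
    (fun i hi => by rw [abs_of_nonneg (hθ0 i)]; linarith [hθ4 i hi])
    (fun p _ => by
      have h1 : (k p : ℝ) ≤ B * X * y p := Nat.floor_le (by have := hy0 p; positivity)
      have h2 : B * X * y p < k p + 1 := Nat.lt_floor_add_one _
      rw [abs_le]
      constructor <;> linarith) (A := 2 * Real.pi) (by positivity)
  have hphase : ∀ h p, eR (X * (x h * y p)) = eR (k p * θ h) *
      Complex.exp (((2 * Real.pi : ℝ) : ℂ) * Complex.I *
        ((θ h : ℂ) * ((B * X * y p - k p : ℝ) : ℂ))) := by
    intro h p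
    have e1 : Complex.exp (((2 * Real.pi : ℝ) : ℂ) * Complex.I *
        ((θ h : ℂ) * ((B * X * y p - k p : ℝ) : ℂ))) = eR (θ h * (B * X * y p - k p)) := by
      rw [eR]
      push_cast
      rfl
    rw [e1, ← eR_add]
    congr 1
    have e2 : B * θ h = x h := by
      rw [hθ]
      field_simp
    rw [← e2]
    ring
  have hgoal : ∑ h ∈ S, ∑ p ∈ T, a h * b p.1 * eR (X * (x h * y p)) =
      ∑ h ∈ S, ∑ p ∈ T, a h * b p.1 * (eR (k p * θ h) *
      Complex.exp (((2 * Real.pi : ℝ) : ℂ) * Complex.I *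
        ((θ h : ℂ) * ((B * X * y p - k p : ℝ) : ℂ)))) :=
    sum_congr rfl fun h _ => sum_congr rfl fun p _ => by rw [hphase]
  rw [hgoal]
  refine htw.trans (le_of_eq ?_)
  rw [hR]
  ring

/-- Bound for `𝔗` in the range `X ≤ MN`. -/
theorem type_I_bound_small_X
    (α β γ : ℝ) (hαβγ : α * β * γ * (1 - α) ≠ 0) :
    ∃ C : ℝ, 0 < C ∧ ∀ X H M N : ℝ, 0 < X → 1 ≤ H → 1 ≤ M → 1 ≤ N → X ≤ M * N →
      ∀ a b : ℕ → ℂ, (∀ h, ‖a h‖ ≤ 1) → (∀ m, ‖b m‖ ≤ 1) →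
      ‖∑ h ∈ Finset.Ioc ⌊H⌋₊ ⌊2 * H⌋₊, ∑ m ∈ Finset.Ioc ⌊M⌋₊ ⌊2 * M⌋₊,
          ∑ n ∈ Finset.Ioc ⌊N⌋₊ ⌊2 * N⌋₊,
          a h * b m *
            eR (X * (h : ℝ) ^ α * (m : ℝ) ^ β * (n : ℝ) ^ γ /
              (H ^ α * M ^ β * N ^ γ))‖ ≤
        C * Real.log (2 + X * H * M * N) *
          (H * M ^ ((1 : ℝ) / 2) * N ^ ((1 : ℝ) / 2)
            + X ^ (-(1 : ℝ) / 2) * H * M * N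
            + H ^ ((1 : ℝ) / 2) * M * N) := by
  have hγ : γ ≠ 0 := fun h => hαβγ (by simp [h])
  have hβ : β ≠ 0 := fun h => hαβγ (by simp [h])
  have hα : α ≠ 0 := fun h => hαβγ (by simp [h])
  obtain ⟨C, hC, hbound⟩ := exists_double_large_sieve_bound hα hβ hγ
  refine ⟨C + 16, by positivity, ?_⟩
  intro X H M N hX hH hM hN hXMN a b ha hb
  have hH0 : 0 < H := by linarith
  have hM0 : 0 < M := by linarith
  have hN0 : 0 < N := by linarith
  have hP : 0 < X * H * M * N := by positivity
  have hΛ : 1 / 2 ≤ Real.log (2 + X * H * M * N) := by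
    have : Real.log 2 ≤ Real.log (2 + X * H * M * N) :=
      Real.log_le_log (by norm_num) (by linarith)
    linarith [Real.log_two_gt_d9]
  rcases le_total 1 X with h1X | hX1
  · have h := hbound X H M N h1X hH hM hN hXMN a b ha hb
    have e : ∑ h ∈ Ioc ⌊H⌋₊ ⌊2 * H⌋₊, ∑ m ∈ Ioc ⌊M⌋₊ ⌊2 * M⌋₊, ∑ n ∈ Ioc ⌊N⌋₊ ⌊2 * N⌋₊,
          a h * b m * eR (X * (h : ℝ) ^ α * (m : ℝ) ^ β * (n : ℝ) ^ γ /
              (H ^ α * M ^ β * N ^ γ)) =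
        ∑ h ∈ Ioc ⌊H⌋₊ ⌊2 * H⌋₊, ∑ p ∈ Ioc ⌊M⌋₊ ⌊2 * M⌋₊ ×ˢ Ioc ⌊N⌋₊ ⌊2 * N⌋₊, a h * b p.1 *
          eR (X * (((h : ℝ) / H) ^ α * (((p.1 : ℝ) / M) ^ β * ((p.2 : ℝ) / N) ^ γ))) := by
      refine sum_congr rfl fun h _ => ?_
      rw [sum_product]
      refine sum_congr rfl fun m _ => sum_congr rfl fun n _ => ?_
      rw [Real.div_rpow (by positivity) hH0.le, Real.div_rpow (by positivity) hM0.le,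
        Real.div_rpow (by positivity) hN0.le]
      congr 2
      field_simp
    have hXr : X ^ (-(1 : ℝ) / 2) = 1 / √X := by
      rw [neg_div, Real.rpow_neg hX.le, ← Real.sqrt_eq_rpow, one_div]
    rw [e, hXr, ← Real.sqrt_eq_rpow H]
    refine h.trans ?_
    have q : 0 ≤ H * M ^ ((1 : ℝ) / 2) * N ^ ((1 : ℝ) / 2) := by positivity
    have q2 : M * N * (√H + H / √X) = 1 / √X * H * M * N + √H * M * N := by ring
    refine mul_le_mul ?_ (by rw [q2]; linarith) (by positivity) (by positivity)
    gcongr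
    linarith
  · have h := norm_trilinear_le hH hM hN a b ha hb fun h m n =>
      X * (h : ℝ) ^ α * (m : ℝ) ^ β * (n : ℝ) ^ γ / (H ^ α * M ^ β * N ^ γ)
    refine h.trans ?_
    have h1 : 1 ≤ X ^ (-(1 : ℝ) / 2) :=
      Real.one_le_rpow_of_pos_of_le_one_of_nonpos hX hX1 (by norm_num)
    have q1 : 0 ≤ H * M ^ ((1 : ℝ) / 2) * N ^ ((1 : ℝ) / 2) := by positivity
    have q2 : 0 ≤ H ^ ((1 : ℝ) / 2) * M * N := by positivity
    have q3 : H * M * N ≤ X ^ (-(1 : ℝ) / 2) * H * M * N := by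
      have := le_mul_of_one_le_left (show 0 ≤ H * M * N by positivity) h1
      linarith
    refine mul_le_mul ?_ (by linarith) (by positivity) (by positivity)
    nlinarith
end

section
/- (Vaaler's approximation) There is an absolute constant C such that for every real H ≥ 1 there exist complex numbers a_h (for integers h with 0 < |h| ≤ H) and nonnegative real numbers b_h (for integers h with |h| ≤ H) satisfying |a_h| ≤ C/|h| and b_h ≤ C/H, such that for every real t, the sum Σ_{|h|≤H} b_h e(th) is a nonnegative real number and |ψ(t) − Σ_{0<|h|≤H} a_h e(th)| ≤ Σ_{|h|≤H} b_h e(th). -/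
open Finset

/-- The sawtooth function `ψ(t) = t - ⌊t⌋ - 1/2`. -/
noncomputable def sawtooth (t : ℝ) : ℝ := t - ⌊t⌋ - 1 / 2

lemma eR_eq (t : ℝ) : eR t = Complex.exp (Complex.I * ((2 * Real.pi * t : ℝ) : ℂ)) := by
  unfold eR; congr 1; push_cast; ring

lemma eR_eq_cos_add_sin (t : ℝ) :
    eR t = (Real.cos (2 * Real.pi * t) : ℂ) + (Real.sin (2 * Real.pi * t) : ℂ) * Complex.I := by
  rw [eR_eq, mul_comm, Complex.exp_mul_I, Complex.ofReal_cos, Complex.ofReal_sin]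

lemma eR_re (t : ℝ) : (eR t).re = Real.cos (2 * Real.pi * t) := by
  rw [eR_eq_cos_add_sin]
  simp only [Complex.add_re, Complex.re_ofReal_mul, Complex.ofReal_re, Complex.I_re, mul_zero,
    add_zero]

lemma eR_mul_nat (t : ℝ) (k : ℕ) : eR (t * k) = eR t ^ k := by
  unfold eR; rw [← Complex.exp_nat_mul]; congr 1; push_cast; ring

lemma eR_int (n : ℤ) : eR n = 1 := by
  unfold eR
  rw [Complex.exp_eq_one_iff]
  exact ⟨n, by push_cast; ring⟩

lemma eR_add_int_mul (t : ℝ) (m h : ℤ) : eR ((t + m) * h) = eR (t * h) := by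
  have : (t + m) * (h : ℝ) = t * h + ((m * h : ℤ) : ℝ) := by push_cast; ring
  rw [this, eR_add, eR_int, mul_one]

lemma norm_one_sub_eR (t : ℝ) : ‖1 - eR t‖ = ‖2 * Real.sin (Real.pi * t)‖ := by
  rw [norm_sub_rev, eR_eq, Complex.norm_exp_I_mul_ofReal_sub_one]
  congr 3; ring

lemma norm_one_sub_eR_le {t : ℝ} (ht : 0 ≤ t) : ‖1 - eR t‖ ≤ 2 * Real.pi * t := by
  have hp : 0 ≤ Real.pi * t := mul_nonneg Real.pi_pos.le ht
  have h := Real.abs_sin_le_abs (x := Real.pi * t)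
  rw [abs_of_nonneg hp] at h
  rw [norm_one_sub_eR, Real.norm_eq_abs, abs_mul, abs_two]
  linarith

lemma le_norm_one_sub_eR {t : ℝ} (ht : 0 ≤ t) (ht' : t ≤ 1 / 2) : 4 * t ≤ ‖1 - eR t‖ := by
  have hp := Real.pi_pos
  have h := Real.mul_le_sin (x := Real.pi * t) (by positivity) (by nlinarith)
  have h2 : 2 / Real.pi * (Real.pi * t) = 2 * t := by field_simp
  rw [norm_one_sub_eR]
  refine le_trans ?_ (Real.le_norm_self _)
  linarith

/-- The autocorrelation `∑_{k - l = h} w k * w l` of the weights `w 0, …, w N`. -/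
noncomputable def autocorr (w : ℕ → ℝ) (N : ℕ) (h : ℤ) : ℝ :=
  ∑ k ∈ range (N + 1), ∑ l ∈ range (N + 1), if (k : ℤ) - l = h then w k * w l else 0

lemma autocorr_nonneg {w : ℕ → ℝ} (hw : ∀ k, 0 ≤ w k) (N : ℕ) (h : ℤ) :
    0 ≤ autocorr w N h := by
  refine sum_nonneg fun k _ => sum_nonneg fun l _ => ?_
  split_ifs
  · exact mul_nonneg (hw k) (hw l)
  · exact le_rfl

lemma autocorr_zero (w : ℕ → ℝ) (N : ℕ) : autocorr w N 0 = ∑ k ∈ range (N + 1), w k ^ 2 := by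
  refine sum_congr rfl fun k hk => ?_
  rw [sum_eq_single k]
  · simp [sq]
  · intro l _ hl
    rw [if_neg]
    omega
  · exact fun h => absurd hk h

lemma sum_ite_unique_le {s : Finset ℕ} {p : ℕ → Prop} [DecidablePred p]
    (hp : ∀ i j, p i → p j → i = j) {x : ℝ} (hx : 0 ≤ x) :
    ∑ l ∈ s, (if p l then x else 0) ≤ x := by
  rw [← sum_filter, sum_const, nsmul_eq_mul]
  have hc : #(s.filter p) ≤ 1 := card_le_one.2 fun i hi j hj =>
    hp i j (mem_filter.1 hi).2 (mem_filter.1 hj).2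
  have hc' : (#(s.filter p) : ℝ) ≤ 1 := by exact_mod_cast hc
  nlinarith

lemma autocorr_le (w : ℕ → ℝ) (N : ℕ) (h : ℤ) :
    autocorr w N h ≤ ∑ k ∈ range (N + 1), w k ^ 2 := by
  have h1 : autocorr w N h ≤
      ∑ k ∈ range (N + 1), ∑ l ∈ range (N + 1), (if (k : ℤ) - l = h then w k ^ 2 / 2 else 0) +
      ∑ k ∈ range (N + 1), ∑ l ∈ range (N + 1), (if (k : ℤ) - l = h then w l ^ 2 / 2 else 0) := by
    rw [autocorr, ← sum_add_distrib]
    refine sum_le_sum fun k _ => ?_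
    rw [← sum_add_distrib]
    refine sum_le_sum fun l _ => ?_
    split_ifs
    · nlinarith [sq_nonneg (w k - w l)]
    · simp
  have h2 : ∑ k ∈ range (N + 1), ∑ l ∈ range (N + 1),
      (if (k : ℤ) - l = h then w k ^ 2 / 2 else 0) ≤ ∑ k ∈ range (N + 1), w k ^ 2 / 2 :=
    sum_le_sum fun k _ => sum_ite_unique_le (fun i j hi hj => by omega) (by positivity)
  have h3 : ∑ k ∈ range (N + 1), ∑ l ∈ range (N + 1),
      (if (k : ℤ) - l = h then w l ^ 2 / 2 else 0) ≤ ∑ k ∈ range (N + 1), w k ^ 2 / 2 := by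
    rw [sum_comm]
    exact sum_le_sum fun k _ => sum_ite_unique_le (fun i j hi hj => by omega) (by positivity)
  have h4 : ∑ k ∈ range (N + 1), w k ^ 2 =
      ∑ k ∈ range (N + 1), w k ^ 2 / 2 + ∑ k ∈ range (N + 1), w k ^ 2 / 2 := by
    rw [← sum_add_distrib]; exact sum_congr rfl fun _ _ => by ring
  linarith

lemma autocorr_neg (w : ℕ → ℝ) (N : ℕ) (h : ℤ) : autocorr w N (-h) = autocorr w N h := by
  unfold autocorr
  rw [sum_comm]
  refine sum_congr rfl fun k _ => sum_congr rfl fun l _ => ?_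
  have : ((l : ℤ) - k = -h) ↔ ((k : ℤ) - l = h) := by omega
  simp only [this, mul_comm]

lemma sum_autocorr_mul_eR (w : ℕ → ℝ) (N : ℕ) (t : ℝ) :
    ∑ h ∈ Icc (-(N : ℤ)) N, (autocorr w N h : ℂ) * eR (t * h) =
      ((‖∑ k ∈ range (N + 1), (w k : ℂ) * eR t ^ k‖ ^ 2 : ℝ) : ℂ) := by
  rw [Complex.ofReal_pow, ← Complex.mul_conj', map_sum, sum_mul_sum]
  simp only [autocorr, Complex.ofReal_sum, sum_mul]
  rw [sum_comm]
  refine sum_congr rfl fun k hk => ?_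
  rw [sum_comm]
  refine sum_congr rfl fun l hl => ?_
  rw [mem_range] at hk hl
  rw [sum_eq_single ((k : ℤ) - l)]
  · rw [if_pos rfl, map_mul, Complex.conj_ofReal, ← eR_mul_nat, ← eR_mul_nat, conj_eR]
    have : t * (((k : ℤ) - l : ℤ) : ℝ) = t * k + -(t * l) := by push_cast; ring
    rw [this, eR_add]
    push_cast; ring
  · intro b _ hb
    rw [if_neg hb.symm]; simp
  · intro h
    exact absurd (mem_Icc.2 (by omega)) h

lemma sum_autocorr_mul_cos (w : ℕ → ℝ) (N : ℕ) (t : ℝ) :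
    ∑ h ∈ Icc (-(N : ℤ)) N, autocorr w N h * Real.cos (2 * Real.pi * (t * h)) =
      ‖∑ k ∈ range (N + 1), (w k : ℂ) * eR t ^ k‖ ^ 2 := by
  have h := congrArg Complex.re (sum_autocorr_mul_eR w N t)
  rw [Complex.re_sum, Complex.ofReal_re] at h
  rw [← h]
  exact sum_congr rfl fun k _ => by rw [Complex.re_ofReal_mul, eR_re]

/-- A damped geometric sum has no zeros on the unit circle. -/
lemma le_norm_damped_geom_sum {n : ℕ} (hn : 1 ≤ n) {t : ℝ} (ht : 0 ≤ t) :
    1 / 2 ≤ ‖∑ k ∈ range n, (((n : ℝ) / (n + 1)) ^ k : ℝ) * eR t ^ k‖ *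
      (1 / n + 2 * Real.pi * t) := by
  have hn0 : (0 : ℝ) < n := by exact_mod_cast hn
  set r : ℝ := (n : ℝ) / (n + 1) with hr
  have hr0 : 0 < r := by positivity
  have hr1 : r ≤ 1 := by rw [hr, div_le_one (by positivity)]; linarith
  have hrn : r ^ n ≤ 1 / 2 := by
    have hb := one_add_mul_le_pow (a := 1 / (n : ℝ))
      (by linarith [show 0 < 1 / (n : ℝ) by positivity]) n
    have hinv : r = (1 + 1 / (n : ℝ))⁻¹ := by rw [hr]; field_simp
    rw [hinv, inv_pow, one_div (2 : ℝ)]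
    apply inv_anti₀ two_pos
    have : (n : ℝ) * (1 / n) = 1 := by field_simp
    linarith
  have hsum : ∑ k ∈ range n, ((r ^ k : ℝ) : ℂ) * eR t ^ k = ∑ k ∈ range n, ((r : ℂ) * eR t) ^ k :=
    sum_congr rfl fun k _ => by rw [mul_pow]; push_cast; ring
  have hgeom := congrArg norm (geom_sum_mul_neg ((r : ℂ) * eR t) n)
  rw [norm_mul] at hgeom
  have h1 : 1 / 2 ≤ ‖1 - ((r : ℂ) * eR t) ^ n‖ := by
    have := norm_sub_norm_le (1 : ℂ) (((r : ℂ) * eR t) ^ n)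
    rw [norm_one, norm_pow, norm_mul, norm_eR, Complex.norm_real, Real.norm_of_nonneg hr0.le,
      mul_one] at this
    linarith
  have h2 : ‖1 - (r : ℂ) * eR t‖ ≤ 1 / n + 2 * Real.pi * t := by
    have heq : 1 - (r : ℂ) * eR t = ((1 - r : ℝ) : ℂ) + r * (1 - eR t) := by push_cast; ring
    have h3 := norm_add_le ((1 - r : ℝ) : ℂ) (r * (1 - eR t))
    rw [← heq, norm_mul, Complex.norm_real, Complex.norm_real, Real.norm_of_nonneg hr0.le,
      Real.norm_of_nonneg (by linarith)] at h3
    have h4 := norm_one_sub_eR_le ht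
    have h5 : 1 - r ≤ 1 / n := by
      have : 1 - r = 1 / (n + 1) := by rw [hr]; field_simp; ring
      rw [this]
      exact one_div_le_one_div_of_le hn0 (by linarith)
    have h6 : r * ‖1 - eR t‖ ≤ ‖1 - eR t‖ := mul_le_of_le_one_left (norm_nonneg _) hr1
    linarith
  rw [hsum]
  calc 1 / 2 ≤ _ := h1
    _ = _ := hgeom.symm
    _ ≤ _ := by gcongr

/-- Coefficients of `(1 + X + ⋯ + X ^ (M - 1)) ^ 2`. -/
noncomputable def fejerCoeff (M k : ℕ) : ℝ :=
  (((∑ i ∈ range M, Polynomial.X ^ i) ^ 2 : Polynomial ℕ).coeff k : ℕ)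

lemma fejerCoeff_nonneg (M k : ℕ) : 0 ≤ fejerCoeff M k := Nat.cast_nonneg _

lemma sum_fejerCoeff_mul_pow {R : Type*} [CommRing R] [Algebra ℝ R] {M N : ℕ}
    (hMN : 2 * M ≤ N + 2) (z : R) :
    ∑ k ∈ range (N + 1), algebraMap ℝ R (fejerCoeff M k) * z ^ k =
      (∑ i ∈ range M, z ^ i) ^ 2 := by
  have hdeg : ((∑ i ∈ range M, Polynomial.X ^ i) ^ 2 : Polynomial ℕ).natDegree < N + 1 := by
    have h1 : (∑ i ∈ range M, Polynomial.X ^ i : Polynomial ℕ).natDegree ≤ M - 1 := by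
      refine Polynomial.natDegree_sum_le_of_forall_le _ _ fun i hi => ?_
      rw [Polynomial.natDegree_X_pow]
      have := mem_range.1 hi
      omega
    have h2 := Polynomial.natDegree_pow_le_of_le 2 h1
    omega
  have h := Polynomial.aeval_eq_sum_range' hdeg z
  simp only [map_pow, map_sum, Polynomial.aeval_X] at h
  rw [h]
  exact sum_congr rfl fun k _ => by simp [fejerCoeff, nsmul_eq_mul]

lemma le_sum_fejerCoeff_sq {M N : ℕ} (hM : 1 ≤ M) (hMN : 2 * M ≤ N + 2) (hNM : N + 1 ≤ 2 * M) :
    (M : ℝ) ^ 3 / 2 ≤ ∑ k ∈ range (N + 1), fejerCoeff M k ^ 2 := by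
  have h1 := sum_fejerCoeff_mul_pow hMN (1 : ℝ)
  simp only [one_pow, mul_one, Algebra.algebraMap_self, RingHom.id_apply, sum_const, card_range,
    nsmul_eq_mul] at h1
  have h2 := sq_sum_le_card_mul_sum_sq (s := range (N + 1)) (f := fejerCoeff M)
  rw [h1, card_range] at h2
  have hM' : (0 : ℝ) < M := by exact_mod_cast hM
  have h3 : ((N + 1 : ℕ) : ℝ) ≤ 2 * M := by exact_mod_cast hNM
  have h4 : 0 ≤ ∑ k ∈ range (N + 1), fejerCoeff M k ^ 2 := sum_nonneg fun _ _ => sq_nonneg _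
  have h5 : (M : ℝ) * (M : ℝ) ^ 3 ≤ M * (2 * ∑ k ∈ range (N + 1), fejerCoeff M k ^ 2) := by
    nlinarith
  have := le_of_mul_le_mul_left h5 hM'
  linarith

lemma norm_fejer_sum_sq_le {M N : ℕ} (hMN : 2 * M ≤ N + 2) {t : ℝ} (ht : 0 < t)
    (ht' : t ≤ 1 / 2) :
    ‖∑ k ∈ range (N + 1), (fejerCoeff M k : ℂ) * eR t ^ k‖ ^ 2 ≤ 1 / (16 * t ^ 4) := by
  have h1 := sum_fejerCoeff_mul_pow hMN (eR t)
  rw [Complex.coe_algebraMap] at h1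
  rw [h1, norm_pow]
  have h2 : ‖∑ i ∈ range M, eR t ^ i‖ ≤ 1 / (2 * t) := by
    rw [le_div_iff₀ (by positivity)]
    have hgeom := congrArg norm (geom_sum_mul_neg (eR t) M)
    rw [norm_mul] at hgeom
    have h3 : ‖1 - eR t ^ M‖ ≤ 2 := by
      refine (norm_sub_le _ _).trans ?_
      rw [norm_pow, norm_eR, norm_one]; norm_num
    have h4 := mul_le_mul_of_nonneg_left (le_norm_one_sub_eR ht.le ht')
      (norm_nonneg (∑ i ∈ range M, eR t ^ i))
    linarith
  calc (‖∑ i ∈ range M, eR t ^ i‖ ^ 2) ^ 2 ≤ ((1 / (2 * t)) ^ 2) ^ 2 := by gcongr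
    _ = 1 / (16 * t ^ 4) := by field_simp; norm_num

/-- The odd sine polynomial whose derivative is `∑_{h ≠ 0} c h * cos (2πht)`. -/
noncomputable def sineSum (c : ℤ → ℝ) (N : ℕ) (t : ℝ) : ℝ :=
  ∑ h ∈ (Icc (-(N : ℤ)) N).erase 0,
    c h / (2 * Real.pi * h) * Real.sin (2 * Real.pi * (t * h))

lemma hasDerivAt_sineSum (c : ℤ → ℝ) (N : ℕ) (t : ℝ) :
    HasDerivAt (sineSum c N)
      (∑ h ∈ Icc (-(N : ℤ)) N, c h * Real.cos (2 * Real.pi * (t * h)) - c 0) t := by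
  have hsplit := add_sum_erase (Icc (-(N : ℤ)) N)
    (fun h => c h * Real.cos (2 * Real.pi * (t * h))) (a := 0) (by simp)
  simp only [Int.cast_zero, mul_zero, Real.cos_zero, mul_one] at hsplit
  rw [← hsplit, add_sub_cancel_left]
  refine HasDerivAt.fun_sum fun h hh => ?_
  have hh0 : (h : ℝ) ≠ 0 := by exact_mod_cast (mem_erase.1 hh).1
  have hpi := Real.pi_ne_zero
  have h1 : HasDerivAt (fun t : ℝ => 2 * Real.pi * (t * h)) (2 * Real.pi * (1 * h)) t :=
    ((hasDerivAt_id t).mul_const (h : ℝ)).const_mul _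
  refine (h1.sin.const_mul (c h / (2 * Real.pi * h))).congr_deriv ?_
  field_simp

lemma sineSum_zero (c : ℤ → ℝ) (N : ℕ) : sineSum c N 0 = 0 := by
  simp [sineSum]

lemma sineSum_one_sub (c : ℤ → ℝ) (N : ℕ) (t : ℝ) : sineSum c N (1 - t) = -sineSum c N t := by
  unfold sineSum
  rw [← sum_neg_distrib]
  refine sum_congr rfl fun h _ => ?_
  have : 2 * Real.pi * ((1 - t) * h) = h * (2 * Real.pi) - 2 * Real.pi * (t * h) := by ring
  rw [this, Real.sin_int_mul_two_pi_sub]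
  ring

lemma sineSum_half (c : ℤ → ℝ) (N : ℕ) : sineSum c N (1 / 2) = 0 := by
  have := sineSum_one_sub c N (1 / 2)
  norm_num at this ⊢
  linarith

lemma sum_div_mul_eR_eq_sineSum {c : ℤ → ℝ} (hc : ∀ h, c (-h) = c h) (N : ℕ) (t : ℝ) :
    ∑ h ∈ (Icc (-(N : ℤ)) N).erase 0, ((c h / (2 * Real.pi * h) : ℝ) * Complex.I) * eR (t * h) =
      -(sineSum c N t : ℂ) := by
  set s := (Icc (-(N : ℤ)) N).erase 0 with hs
  have hcos : ∑ h ∈ s, c h / (2 * Real.pi * h) * Real.cos (2 * Real.pi * (t * h)) = 0 := by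
    have hneg : ∑ h ∈ s, c h / (2 * Real.pi * h) * Real.cos (2 * Real.pi * (t * h)) =
        ∑ h ∈ s, -(c h / (2 * Real.pi * h) * Real.cos (2 * Real.pi * (t * h))) := by
      refine sum_nbij' (fun h => -h) (fun h => -h) ?_ ?_ ?_ ?_ ?_
      · intro h hh; simp only [hs, mem_erase, mem_Icc] at hh ⊢; omega
      · intro h hh; simp only [hs, mem_erase, mem_Icc] at hh ⊢; omega
      · simp
      · simp
      · intro h _
        rw [hc]
        push_cast
        rw [mul_neg, mul_neg, mul_neg, Real.cos_neg, div_neg]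
        ring
    rw [sum_neg_distrib] at hneg
    linarith
  have hterm : ∀ h ∈ s, ((c h / (2 * Real.pi * h) : ℝ) * Complex.I) * eR (t * h) =
      ((c h / (2 * Real.pi * h) * Real.cos (2 * Real.pi * (t * h)) : ℝ) : ℂ) * Complex.I -
      ((c h / (2 * Real.pi * h) * Real.sin (2 * Real.pi * (t * h)) : ℝ) : ℂ) := by
    intro h _
    rw [eR_eq_cos_add_sin, Complex.ofReal_mul, Complex.ofReal_mul]
    linear_combination ((c h / (2 * Real.pi * h) : ℝ) : ℂ) *
      (Real.sin (2 * Real.pi * (t * h)) : ℂ) * Complex.I_sq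
  rw [sum_congr rfl hterm, sum_sub_distrib, ← sum_mul, ← Complex.ofReal_sum, hcos, sineSum,
    Complex.ofReal_sum, Complex.ofReal_zero, zero_mul, zero_sub]

/-- The difference between the sawtooth and `-S` on `[0, 1/2]`, when `1 + S'` is a nonnegative
kernel decaying like `1 / (M ^ 3 t ^ 4)`. -/
lemma abs_sub_half_add_le {S J : ℝ → ℝ} {M : ℝ} (hM : 0 < M)
    (hS : ∀ t, HasDerivAt S (J t - 1) t) (hS0 : S 0 = 0) (hS1 : S (1 / 2) = 0)
    (hJ : ∀ t, 0 ≤ J t) (hJ' : ∀ t, 0 < t → t ≤ 1 / 2 → J t ≤ 1 / (8 * M ^ 3 * t ^ 4))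
    {t : ℝ} (ht : 0 ≤ t) (ht' : t ≤ 1 / 2) :
    |t - 1 / 2 + S t| ≤ 1 / 2 ∧
      (1 ≤ M * t → |t - 1 / 2 + S t| ≤ 1 / (16 * (M * t) ^ 2)) := by
  set D : ℝ → ℝ := fun u => u - 1 / 2 + S u with hD
  have hD' : ∀ u, HasDerivAt D (J u) u := fun u =>
    (((hasDerivAt_id u).sub_const (1 / 2)).add (hS u)).congr_deriv (by ring)
  have hmono : Monotone D :=
    monotone_of_hasDerivAt_nonneg hD' hJ
  have hDh : D (1 / 2) = 0 := by simp only [hD, hS1, sub_self, add_zero]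
  have hDt : D t ≤ 0 := by
    have := hmono ht'
    rwa [hDh] at this
  have hDt0 : -(1 / 2) ≤ D t := by
    have := hmono ht
    simpa [hD, hS0] using this
  change |D t| ≤ 1 / 2 ∧ (1 ≤ M * t → |D t| ≤ 1 / (16 * (M * t) ^ 2))
  rw [abs_of_nonpos hDt]
  refine ⟨by linarith, fun hMt => ?_⟩
  have htpos : 0 < t := by
    rcases ht.eq_or_lt with h | h
    · rw [← h] at hMt; norm_num at hMt
    · exact h
  have hG : ∀ u ∈ Set.Icc t (1 / 2), HasDerivAt (fun u => D u + 1 / (16 * M ^ 2) * (u ^ 2)⁻¹)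
      (J u - 1 / (8 * M ^ 2 * u ^ 3)) u := fun u hu => by
    have hu0 : u ≠ 0 := (htpos.trans_le hu.1).ne'
    refine ((hD' u).add (((hasDerivAt_pow 2 u).inv (by positivity)).const_mul
      (1 / (16 * M ^ 2)))).congr_deriv ?_
    field_simp
    norm_num
    ring
  have hanti : AntitoneOn (fun u => D u + 1 / (16 * M ^ 2) * (u ^ 2)⁻¹) (Set.Icc t (1 / 2)) := by
    refine antitoneOn_of_deriv_nonpos (convex_Icc _ _)
      (fun u hu => (hG u hu).continuousAt.continuousWithinAt)
      (fun u hu => (hG u (interior_subset hu)).differentiableAt.differentiableWithinAt)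
      fun u hu => ?_
    have hu' := interior_subset hu
    have hu0 : 0 < u := htpos.trans_le hu'.1
    have hMu : 1 ≤ M * u := hMt.trans (by gcongr; exact hu'.1)
    rw [(hG u hu').deriv]
    have h1 := hJ' u hu0 hu'.2
    have h2 : 1 / (8 * M ^ 3 * u ^ 4) ≤ 1 / (8 * M ^ 2 * u ^ 3) := by
      apply one_div_le_one_div_of_le (by positivity)
      calc 8 * M ^ 2 * u ^ 3 = 8 * M ^ 2 * u ^ 3 * 1 := by ring
        _ ≤ 8 * M ^ 2 * u ^ 3 * (M * u) := by gcongr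
        _ = 8 * M ^ 3 * u ^ 4 := by ring
    linarith
  have hfin := hanti (Set.left_mem_Icc.2 ht') (Set.right_mem_Icc.2 ht') ht'
  have hpos : 0 ≤ 1 / (16 * M ^ 2) * (((1 : ℝ) / 2) ^ 2)⁻¹ := by positivity
  have heq : 1 / (16 * (M * t) ^ 2) = 1 / (16 * M ^ 2) * (t ^ 2)⁻¹ := by
    field_simp
  simp only [hDh] at hfin
  rw [heq]
  linarith

/-- The majorant dominates both `1 / 2` near `0` and `1 / (16 (M t) ^ 2)` away from `0`. -/
lemma le_majorant_of_bounds {M n : ℕ} (hn : 1 ≤ n) (hnM : n ≤ 2 * M) {t x : ℝ} (ht : 0 ≤ t)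
    (hx : x ≤ 1 / 2) (hx' : 1 ≤ M * t → x ≤ 1 / (16 * (M * t) ^ 2)) :
    x ≤ 400 / (n : ℝ) ^ 2 *
      ‖∑ k ∈ range n, (((n : ℝ) / (n + 1)) ^ k : ℝ) * eR t ^ k‖ ^ 2 := by
  set q := ‖∑ k ∈ range n, (((n : ℝ) / (n + 1)) ^ k : ℝ) * eR t ^ k‖ with hq
  have hq0 : 0 ≤ q := norm_nonneg _
  have h := le_norm_damped_geom_sum hn ht
  rw [← hq] at h
  have hn0 : (0 : ℝ) < n := by exact_mod_cast hn
  have hnM' : (n : ℝ) ≤ 2 * M := by exact_mod_cast hnM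
  have hpi := Real.pi_lt_d2
  have hp0 := Real.pi_pos
  set y := q / n with hy
  have hy0 : 0 ≤ y := by positivity
  have hgoal : 400 / (n : ℝ) ^ 2 * q ^ 2 = 400 * y ^ 2 := by rw [hy]; field_simp
  have hyl : 1 / 2 ≤ y * (1 + 2 * Real.pi * (n * t)) := by
    have : y * (1 + 2 * Real.pi * (n * t)) = q * (1 / n + 2 * Real.pi * t) := by
      rw [hy]; field_simp
    rw [this]; exact h
  have hnt : (n : ℝ) * t ≤ 2 * (M * t) := by nlinarith
  have hyl' : 1 / 2 ≤ y * (1 + 13 * (M * t)) := by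
    refine hyl.trans (mul_le_mul_of_nonneg_left ?_ hy0)
    have hMt0 : 0 ≤ (M : ℝ) * t := by positivity
    nlinarith
  rw [hgoal]
  rcases le_total 1 ((M : ℝ) * t) with hMt | hMt
  · refine (hx' hMt).trans ?_
    rw [div_le_iff₀ (by positivity)]
    have : 1 / 2 ≤ y * (14 * (M * t)) := hyl'.trans (by gcongr; linarith)
    nlinarith
  · refine hx.trans ?_
    have : 1 / 2 ≤ y * 14 := hyl'.trans (by gcongr; linarith)
    nlinarith

lemma norm_sum_mul_eR_one_sub_pow (n : ℕ) (w : ℕ → ℝ) (t : ℝ) :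
    ‖∑ k ∈ range n, (w k : ℂ) * eR (1 - t) ^ k‖ = ‖∑ k ∈ range n, (w k : ℂ) * eR t ^ k‖ := by
  have h1 : eR (1 - t) = (starRingEnd ℂ) (eR t) := by
    rw [conj_eR, sub_eq_add_neg, eR_add, ← Int.cast_one, eR_int, one_mul]
  have h2 : ∑ k ∈ range n, (w k : ℂ) * eR (1 - t) ^ k =
      (starRingEnd ℂ) (∑ k ∈ range n, (w k : ℂ) * eR t ^ k) := by
    simp [h1, map_sum]
  rw [h2, RCLike.norm_conj]

/-- Approximation of the sawtooth on one period by a sine polynomial. -/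
lemma abs_sub_half_add_sineSum_le {M N : ℕ} (hM : 1 ≤ M) (hMN : 2 * M ≤ N + 2)
    (hNM : N + 1 ≤ 2 * M) {t : ℝ} (ht : 0 ≤ t) (ht' : t ≤ 1) :
    |t - 1 / 2 + sineSum
        (fun h => autocorr (fejerCoeff M) N h / autocorr (fejerCoeff M) N 0) N t| ≤
      400 / ((N + 1 : ℕ) : ℝ) ^ 2 * ‖∑ k ∈ range (N + 1),
        (((((N + 1 : ℕ) : ℝ) / ((N + 1 : ℕ) + 1)) ^ k : ℝ) : ℂ) * eR t ^ k‖ ^ 2 := by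
  have hM0 : (0 : ℝ) < M := by exact_mod_cast hM
  set c0 := autocorr (fejerCoeff M) N 0 with hc0
  have hc0_le : (M : ℝ) ^ 3 / 2 ≤ c0 := by
    rw [hc0, autocorr_zero]; exact le_sum_fejerCoeff_sq hM hMN hNM
  have hc0_pos : 0 < c0 := lt_of_lt_of_le (by positivity) hc0_le
  set c : ℤ → ℝ := fun h => autocorr (fejerCoeff M) N h / c0 with hc
  wlog hhalf : t ≤ 1 / 2 generalizing t
  · have := this (t := 1 - t) (by linarith) (by linarith) (by linarith)
    rw [sineSum_one_sub, norm_sum_mul_eR_one_sub_pow] at this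
    rwa [← abs_neg, show -(t - 1 / 2 + sineSum c N t) = 1 - t - 1 / 2 + -sineSum c N t by ring]
  have hS : ∀ u, HasDerivAt (sineSum c N)
      (‖∑ k ∈ range (N + 1), (fejerCoeff M k : ℂ) * eR u ^ k‖ ^ 2 / c0 - 1) u := fun u => by
    convert hasDerivAt_sineSum c N u using 1
    rw [← sum_autocorr_mul_cos, sum_div, hc]
    simp only [← hc0, div_self hc0_pos.ne']
    congr 1
    exact sum_congr rfl fun h _ => by ring
  obtain ⟨h1, h2⟩ := abs_sub_half_add_le hM0 hS (sineSum_zero c N) (sineSum_half c N)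
    (fun u => by positivity)
    (fun u hu hu' => by
      rw [div_le_iff₀ hc0_pos]
      refine (norm_fejer_sum_sq_le hMN hu hu').trans ?_
      calc 1 / (16 * u ^ 4) = 1 / (8 * (M : ℝ) ^ 3 * u ^ 4) * ((M : ℝ) ^ 3 / 2) := by
            field_simp; norm_num
        _ ≤ _ := by gcongr) ht hhalf
  exact le_majorant_of_bounds (Nat.le_add_left 1 N) hNM ht h1 h2

/-- Vaaler's approximation of the sawtooth function by trigonometric polynomials. -/
theorem vaaler_approximation :
    ∃ C : ℝ, 0 < C ∧ ∀ H : ℝ, 1 ≤ H →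
      ∃ a : ℤ → ℂ, ∃ b : ℤ → ℝ,
        (∀ h : ℤ, h ≠ 0 → |(h : ℝ)| ≤ H → ‖a h‖ ≤ C / |(h : ℝ)|) ∧
        (∀ h : ℤ, |(h : ℝ)| ≤ H → 0 ≤ b h ∧ b h ≤ C / H) ∧
        ∀ t : ℝ,
          (∑ h ∈ Finset.Icc (-⌊H⌋) ⌊H⌋, (b h : ℂ) * eR (t * h)).im = 0 ∧
          0 ≤ (∑ h ∈ Finset.Icc (-⌊H⌋) ⌊H⌋, (b h : ℂ) * eR (t * h)).re ∧
          ‖(sawtooth t : ℂ) -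
              ∑ h ∈ (Finset.Icc (-⌊H⌋) ⌊H⌋).erase 0, a h * eR (t * h)‖ ≤
            (∑ h ∈ Finset.Icc (-⌊H⌋) ⌊H⌋, (b h : ℂ) * eR (t * h)).re := by
  refine ⟨400, by norm_num, fun H hH => ?_⟩
  have hH0 : 0 < H := by linarith
  obtain ⟨N, hN⟩ : ∃ N : ℕ, ⌊H⌋ = N := Int.eq_ofNat_of_zero_le (Int.floor_nonneg.2 hH0.le)
  have hHN : H ≤ ((N + 1 : ℕ) : ℝ) := by
    have := Int.lt_floor_add_one H
    rw [hN] at this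
    push_cast at this ⊢
    exact this.le
  rw [hN]
  set n : ℝ := ((N + 1 : ℕ) : ℝ) with hn
  have hn0 : 0 < n := hH0.trans_le hHN
  set M := N / 2 + 1 with hM
  set c : ℤ → ℝ := fun h => autocorr (fejerCoeff M) N h / autocorr (fejerCoeff M) N 0 with hc
  set w : ℕ → ℝ := fun k => (n / (n + 1)) ^ k with hw
  have hw0 : ∀ k, 0 ≤ w k := fun k => by positivity
  have hw1 : ∀ k, w k ^ 2 ≤ 1 := fun k => by
    refine pow_le_one₀ (hw0 k) (pow_le_one₀ (by positivity) ?_)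
    rw [div_le_one (by positivity)]; linarith
  have hc0 : ∀ h, 0 ≤ c h := fun h =>
    div_nonneg (autocorr_nonneg (fejerCoeff_nonneg M) N h)
      (autocorr_nonneg (fejerCoeff_nonneg M) N 0)
  have hc1 : ∀ h, c h ≤ 1 := fun h =>
    div_le_one_of_le₀ (by rw [autocorr_zero]; exact autocorr_le _ N h)
      (autocorr_nonneg (fejerCoeff_nonneg M) N 0)
  refine ⟨fun h => (c h / (2 * Real.pi * h) : ℝ) * Complex.I,
    fun h => 400 / n ^ 2 * autocorr w N h, ?_, ?_, fun t => ?_⟩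
  · intro h hh _
    have hh0 : 0 < |(h : ℝ)| := abs_pos.2 (by exact_mod_cast hh)
    rw [norm_mul, Complex.norm_I, mul_one, Complex.norm_real, Real.norm_eq_abs, abs_div, abs_mul,
      abs_of_nonneg (hc0 h), abs_of_pos Real.two_pi_pos, ← div_div]
    gcongr
    rw [div_le_iff₀ Real.two_pi_pos]
    nlinarith [hc1 h, Real.pi_gt_three]
  · intro h _
    refine ⟨mul_nonneg (by positivity) (autocorr_nonneg hw0 N h), ?_⟩
    have hle : autocorr w N h ≤ n := by
      refine (autocorr_le w N h).trans ((sum_le_sum fun k _ => hw1 k).trans ?_)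
      simp [hn]
    calc 400 / n ^ 2 * autocorr w N h ≤ 400 / n ^ 2 * n := by gcongr
      _ = 400 / n := by field_simp
      _ ≤ 400 / H := by gcongr
  · have hB : ∑ h ∈ Icc (-(N : ℤ)) N, ((400 / n ^ 2 * autocorr w N h : ℝ) : ℂ) * eR (t * h) =
        ((400 / n ^ 2 * ‖∑ k ∈ range (N + 1), (w k : ℂ) * eR (Int.fract t) ^ k‖ ^ 2 : ℝ) : ℂ) := by
      rw [Complex.ofReal_mul, ← sum_autocorr_mul_eR, mul_sum]
      refine sum_congr rfl fun h _ => ?_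
      conv_lhs => rw [← Int.fract_add_floor t]
      rw [eR_add_int_mul, Complex.ofReal_mul, mul_assoc]
    have hA : ∑ h ∈ (Icc (-(N : ℤ)) N).erase 0,
        ((c h / (2 * Real.pi * h) : ℝ) * Complex.I) * eR (t * h) =
          -(sineSum c N (Int.fract t) : ℂ) := by
      rw [← sum_div_mul_eR_eq_sineSum (fun h => by simp only [hc, autocorr_neg])]
      refine sum_congr rfl fun h _ => ?_
      conv_lhs => rw [← Int.fract_add_floor t]
      rw [eR_add_int_mul]
    rw [hB, Complex.ofReal_im, Complex.ofReal_re, hA]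
    refine ⟨rfl, by positivity, ?_⟩
    have hsaw : sawtooth t = Int.fract t - 1 / 2 := rfl
    rw [sub_neg_eq_add, ← Complex.ofReal_add, Complex.norm_real, Real.norm_eq_abs, hsaw]
    exact abs_sub_half_add_sineSum_le (by omega) (by omega) (by omega) (Int.fract_nonneg t)
      (Int.fract_lt_one t).le
end
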